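/- Let n ≥ 5 be a natural number. The genus-zero Hurwitz number h_{1^1 2^1} with one degenerate branch point of reduced ramification type 1^1 2^1 (i.e., one permutation of cycle type (3,2,1^{n-5})) and m = 2n−5 simple branch points satisfies h_{1^1 2^1} = 9·((2n−5)!/(n−5)!)·n^{n−6}. -/

import Mathlib

open Equiv

/-!
Multiplying a permutation by the first transposition of a factorization either joins two of its
cycles, which then lie in one orbit of the group generated by the factors, or cuts one of its
cycles. In the latter case the Riemann–Hurwitz inequality forces the orbit containing the cycle to
split, if the number of factors is minimal. So the numbers of minimal factorizations with
prescribed cycles and orbits satisfy a cut-and-join recursion, which determines them.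

With `m` factors this number is `m!` times a product over the orbits and the cycles: an orbit of
size `n` consisting of `c` cycles contributes `n ^ (c - 3)`, a cycle of length `k` contributes
`k ^ (k + 1) / k!`. That these products satisfy the recursion can be checked orbit by orbit. The
sum over the ways to distribute the remaining cycles of a split orbit is evaluated by Hurwitz's
multinomial extension of Abel's binomial theorem; what is left is a convolution identity for the
numbers `k ^ k / k!`. Allowing several orbits from the start is what makes the recursion linear.
-/

namespace GenusZeroHurwitz

section HurwitzIdentity

open Finset

variable {ι R : Type*} [CommRing R] (l : ι → R)

/-- A polynomial of degree `d` is annihilated by any `d + 1` successive difference operators. -/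
theorem sum_powerset_neg_one_pow_mul_add_sum_pow {K : Finset ι} {d : ℕ} (hd : d < #K) (x : R) :
    ∑ I ∈ K.powerset, (-1) ^ #I * (x + ∑ i ∈ I, l i) ^ d = 0 := by
  classical
  induction K using Finset.induction_on generalizing d with
  | empty => simp at hd
  | insert i K hi ih =>
    rw [card_insert_of_notMem hi] at hd
    have expand : ∀ I ∈ K.powerset, (-1) ^ #(insert i I) * (x + ∑ j ∈ insert i I, l j) ^ d =
        -∑ e ∈ range (d + 1),
          (-1) ^ #I * (x + ∑ j ∈ I, l j) ^ e * (l i ^ (d - e) * d.choose e) := by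
      intro I hI
      have hiI : i ∉ I := fun h => hi (mem_powerset.1 hI h)
      rw [card_insert_of_notMem hiI, sum_insert hiI, add_left_comm, add_comm (l i), add_pow,
        mul_sum, ← sum_neg_distrib]
      exact sum_congr rfl fun e _ => by ring
    have lower : ∀ e ∈ range d, ∑ I ∈ K.powerset,
        (-1) ^ #I * (x + ∑ j ∈ I, l j) ^ e * (l i ^ (d - e) * d.choose e) = 0 := fun e he => by
      rw [← sum_mul, ih ((mem_range.1 he).trans_le (Nat.lt_succ_iff.1 hd)), zero_mul]
    rw [sum_powerset_insert hi, sum_congr rfl expand, sum_neg_distrib, sum_comm, sum_range_succ,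
      sum_eq_zero lower]
    simp

variable [DecidableEq ι]

theorem sum_powerset_sum_sdiff_comm {M : Type*} [AddCommMonoid M] (K : Finset ι)
    (f : Finset ι → ι → M) :
    ∑ I ∈ K.powerset, ∑ j ∈ K \ I, f I j = ∑ j ∈ K, ∑ I ∈ (K.erase j).powerset, f I j := by
  refine sum_comm' fun I j => ?_
  simp only [mem_powerset, mem_sdiff, subset_erase]
  tauto

theorem sum_powerset_sum_powerset_sdiff {M : Type*} [AddCommMonoid M] (K : Finset ι)
    (f : Finset ι → Finset ι → M) :
    ∑ I ∈ K.powerset, ∑ T ∈ (K \ I).powerset, f I T =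
      ∑ J ∈ K.powerset, ∑ I ∈ J.powerset, f I (J \ I) := by
  rw [sum_sigma', sum_sigma']
  refine sum_bij' (fun p _ => ⟨p.1 ∪ p.2, p.1⟩) (fun p _ => ⟨p.2, p.1 \ p.2⟩) ?_ ?_ ?_ ?_ ?_ <;>
    simp only [mem_sigma, mem_powerset, and_imp, Sigma.forall, subset_sdiff]
  · exact fun I T hI hT _ => ⟨union_subset hI hT, subset_union_left⟩
  · exact fun J I hJ hI => ⟨hI.trans hJ, sdiff_subset.trans hJ, sdiff_disjoint⟩
  · exact fun I T _ _ hIT => by rw [union_sdiff_cancel_left hIT.symm]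
  · exact fun J I _ hI => by rw [union_sdiff_of_subset hI]
  · exact fun I T _ _ hIT => by rw [union_sdiff_cancel_left hIT.symm]

/-- The summand `x (x + ∑ i ∈ I, l i) ^ (|I| - 1)` of Hurwitz's multinomial extension of Abel's
binomial theorem, read as `1` when `I = ∅`. -/
def hurwitzTerm (x : R) (I : Finset ι) : R :=
  if I = ∅ then 1 else x * (x + ∑ i ∈ I, l i) ^ (#I - 1)

@[simp]
theorem hurwitzTerm_empty (x : R) : hurwitzTerm l x ∅ = 1 := if_pos rfl

theorem hurwitzTerm_mul_pow (x : R) {I : Finset ι} {d : ℕ} (h : I.Nonempty ∨ d ≠ 0) :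
    hurwitzTerm l x I * (x + ∑ i ∈ I, l i) ^ d = x * (x + ∑ i ∈ I, l i) ^ (#I + d - 1) := by
  rcases I.eq_empty_or_nonempty with rfl | hI
  · obtain ⟨d, rfl⟩ := Nat.exists_eq_succ_of_ne_zero (h.resolve_left not_nonempty_empty)
    simp [pow_succ']
  · rw [hurwitzTerm, if_neg hI.ne_empty, mul_assoc, ← pow_add, Nat.sub_add_comm hI.card_pos]

theorem hurwitzTerm_eq_pow_sub_sum (x : R) (I : Finset ι) :
    hurwitzTerm l x I = (x + ∑ i ∈ I, l i) ^ #I -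
      ∑ j ∈ I, l j * (x + l j + ∑ i ∈ I.erase j, l i) ^ #(I.erase j) := by
  rcases I.eq_empty_or_nonempty with rfl | hI
  · simp
  · have shift : ∀ j ∈ I, l j * (x + l j + ∑ i ∈ I.erase j, l i) ^ #(I.erase j) =
        l j * (x + ∑ i ∈ I, l i) ^ (#I - 1) := fun j hj => by
      rw [add_assoc, add_sum_erase _ _ hj, card_erase_of_mem hj]
    rw [sum_congr rfl shift, ← sum_mul, hurwitzTerm, if_neg hI.ne_empty,
      ← mul_pow_sub_one hI.card_pos.ne' (x + ∑ i ∈ I, l i)]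
    ring

theorem sum_hurwitzTerm_mul_neg_pow (x : R) {J : Finset ι} (hJ : J.Nonempty) :
    ∑ I ∈ J.powerset, hurwitzTerm l x I * (-(x + ∑ i ∈ I, l i)) ^ #(J \ I) = 0 := by
  have eval : ∀ I ∈ J.powerset, hurwitzTerm l x I * (-(x + ∑ i ∈ I, l i)) ^ #(J \ I) =
      (-1) ^ #J * x * ((-1) ^ #I * (x + ∑ i ∈ I, l i) ^ (#J - 1)) := by
    intro I hI
    have hcard : #I + #(J \ I) = #J := by
      rw [add_comm, card_sdiff_add_card_eq_card (mem_powerset.1 hI)]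
    have h : I.Nonempty ∨ #(J \ I) ≠ 0 := by
      rw [← card_pos]; have := hJ.card_pos; omega
    have sign : (-1 : R) ^ #(J \ I) = (-1) ^ #J * (-1) ^ #I := by
      rw [← hcard, pow_add, mul_right_comm, ← pow_add, Even.neg_one_pow ⟨#I, rfl⟩, one_mul]
    rw [neg_pow, mul_left_comm, hurwitzTerm_mul_pow l x h, hcard, sign]
    ring
  rw [sum_congr rfl eval, ← mul_sum, sum_powerset_neg_one_pow_mul_add_sum_pow l
    (Nat.sub_lt hJ.card_pos one_pos), mul_zero]

/-- Write `y + ∑ K \ I` as `(x + y + ∑ K) - (x + ∑ I)` and expand in powers of `x + y + ∑ K`. -/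
theorem sum_hurwitzTerm_mul_pow (x y : R) (K : Finset ι) :
    ∑ I ∈ K.powerset, hurwitzTerm l x I * (y + ∑ j ∈ K \ I, l j) ^ #(K \ I) =
      (x + y + ∑ i ∈ K, l i) ^ #K := by
  set u := x + y + ∑ i ∈ K, l i
  have expand : ∀ I ∈ K.powerset, hurwitzTerm l x I * (y + ∑ j ∈ K \ I, l j) ^ #(K \ I) =
      ∑ T ∈ (K \ I).powerset,
        u ^ (#K - #(I ∪ T)) * (hurwitzTerm l x I * (-(x + ∑ i ∈ I, l i)) ^ #T) := by
    intro I hI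
    have hu : y + ∑ j ∈ K \ I, l j = -(x + ∑ i ∈ I, l i) + u := by
      rw [show u = x + y + ∑ i ∈ K, l i from rfl, ← sum_sdiff (mem_powerset.1 hI)]; ring
    rw [hu, ← sum_pow_mul_eq_add_pow, mul_sum]
    refine sum_congr rfl fun T hT => ?_
    have hT := subset_sdiff.1 (mem_powerset.1 hT)
    rw [card_union_of_disjoint hT.2.symm, card_sdiff_of_subset (mem_powerset.1 hI), Nat.sub_sub]
    ring
  rw [sum_congr rfl expand, sum_powerset_sum_powerset_sdiff, sum_eq_single_of_mem ∅ (by simp)]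
  · simp
  · intro J _ hJ
    have union : ∀ I ∈ J.powerset, u ^ (#K - #(I ∪ J \ I)) *
        (hurwitzTerm l x I * (-(x + ∑ i ∈ I, l i)) ^ #(J \ I)) =
        u ^ (#K - #J) * (hurwitzTerm l x I * (-(x + ∑ i ∈ I, l i)) ^ #(J \ I)) := fun I hI => by
      rw [union_sdiff_of_subset (mem_powerset.1 hI)]
    rw [sum_congr rfl union, ← mul_sum,
      sum_hurwitzTerm_mul_neg_pow l x (nonempty_iff_ne_empty.2 hJ), mul_zero]

/-- Hurwitz's identity: the `hurwitzTerm`s are of binomial type. -/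
theorem sum_hurwitzTerm_mul_hurwitzTerm (x y : R) (K : Finset ι) :
    ∑ I ∈ K.powerset, hurwitzTerm l x I * hurwitzTerm l y (K \ I) = hurwitzTerm l (x + y) K := by
  have expand : ∀ I ∈ K.powerset, hurwitzTerm l x I * hurwitzTerm l y (K \ I) =
      hurwitzTerm l x I * (y + ∑ j ∈ K \ I, l j) ^ #(K \ I) -
        ∑ j ∈ K \ I, l j * (hurwitzTerm l x I *
          (y + l j + ∑ i ∈ K.erase j \ I, l i) ^ #(K.erase j \ I)) := fun I _ => by
    rw [hurwitzTerm_eq_pow_sub_sum l y, mul_sub, mul_sum]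
    simp only [← erase_sdiff_comm, mul_left_comm]
  rw [sum_congr rfl expand, sum_sub_distrib, sum_powerset_sum_sdiff_comm,
    sum_hurwitzTerm_mul_pow, hurwitzTerm_eq_pow_sub_sum]
  simp only [← mul_sum, sum_hurwitzTerm_mul_pow, ← add_assoc]

end HurwitzIdentity

section SplitSum

open Finset

variable {ι k : Type*} [Field k]

theorem hurwitzTerm_eq_mul_zpow [DecidableEq ι] (l : ι → k) {x : k} (hx : x ≠ 0) (I : Finset ι) :
    hurwitzTerm l x I = x * (x + ∑ i ∈ I, l i) ^ ((#I : ℤ) - 1) := by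
  rcases I.eq_empty_or_nonempty with rfl | hI
  · simp [hx]
  · rw [hurwitzTerm, if_neg hI.ne_empty, ← zpow_natCast, Nat.cast_pred hI.card_pos]

/-- The total weight of the ways to distribute the elements of `K` over two blocks, one
containing an element of size `x` and the other an element of size `y`. A block of `c` elements of
total size `b` has weight `b ^ (c - 3)`. -/
def splitSum [DecidableEq ι] (l : ι → k) (K : Finset ι) (x y : k) : k :=
  ∑ I ∈ K.powerset, (x + ∑ j ∈ I, l j) ^ ((#I : ℤ) - 2) *
    (y + ∑ j ∈ K \ I, l j) ^ ((#(K \ I) : ℤ) - 2)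

variable [LinearOrder k] [IsStrictOrderedRing k] {l : ι → k} {x y : k}

theorem add_sum_pos (hl : ∀ i, 0 ≤ l i) (hx : 0 < x) (I : Finset ι) : 0 < x + ∑ i ∈ I, l i :=
  add_pos_of_pos_of_nonneg hx (sum_nonneg fun i _ => hl i)

variable [DecidableEq ι]

theorem zpow_card_sub_two_eq (hl : ∀ i, 0 ≤ l i) (hx : 0 < x) (I : Finset ι) :
    (x + ∑ i ∈ I, l i) ^ ((#I : ℤ) - 2) = hurwitzTerm l x I / x ^ 2 -
      ∑ j ∈ I, l j / (x * (x + l j)) * hurwitzTerm l (x + l j) (I.erase j) := by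
  have hI := (add_sum_pos hl hx I).ne'
  have shift : ∀ j ∈ I, l j / (x * (x + l j)) * hurwitzTerm l (x + l j) (I.erase j) =
      l j * ((x + ∑ i ∈ I, l i) ^ ((#I : ℤ) - 2) / x) := fun j hj => by
    have hxj : x + l j ≠ 0 := (add_pos_of_pos_of_nonneg hx (hl j)).ne'
    rw [hurwitzTerm_eq_mul_zpow l hxj, add_assoc, add_sum_erase _ _ hj, cast_card_erase_of_mem hj,
      show (#I : ℤ) - 1 - 1 = #I - 2 by ring]
    field_simp
  rw [sum_congr rfl shift, ← sum_mul, hurwitzTerm_eq_mul_zpow l hx.ne',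
    show (#I : ℤ) - 1 = #I - 2 + 1 by ring, zpow_add_one₀ hI]
  field_simp
  ring

theorem sum_hurwitzTerm_mul_zpow (hl : ∀ i, 0 ≤ l i) (hy : 0 < y) (K : Finset ι) :
    ∑ I ∈ K.powerset, hurwitzTerm l x I * (y + ∑ j ∈ K \ I, l j) ^ ((#(K \ I) : ℤ) - 2) =
      hurwitzTerm l (x + y) K / y ^ 2 -
        ∑ j ∈ K, l j / (y * (y + l j)) * hurwitzTerm l (x + y + l j) (K.erase j) := by
  have expand : ∀ I ∈ K.powerset,
      hurwitzTerm l x I * (y + ∑ j ∈ K \ I, l j) ^ ((#(K \ I) : ℤ) - 2) =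
        hurwitzTerm l x I * hurwitzTerm l y (K \ I) / y ^ 2 -
          ∑ j ∈ K \ I, l j / (y * (y + l j)) *
            (hurwitzTerm l x I * hurwitzTerm l (y + l j) (K.erase j \ I)) := fun I _ => by
    rw [zpow_card_sub_two_eq hl hy, mul_sub, mul_sum, mul_div_assoc]
    simp only [← erase_sdiff_comm, mul_left_comm]
  rw [sum_congr rfl expand, sum_sub_distrib, sum_powerset_sum_sdiff_comm, ← sum_div,
    sum_hurwitzTerm_mul_hurwitzTerm]
  simp only [← mul_sum, sum_hurwitzTerm_mul_hurwitzTerm, ← add_assoc]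

/-- The total size is the sum of the sizes of the two blocks, and each summand turns one of the two
factors into a `hurwitzTerm`. -/
theorem mul_splitSum (hl : ∀ i, 0 ≤ l i) (hx : 0 < x) (hy : 0 < y) (K : Finset ι) :
    (x + y + ∑ i ∈ K, l i) * splitSum l K x y =
      (∑ I ∈ K.powerset, hurwitzTerm l x I *
        (y + ∑ j ∈ K \ I, l j) ^ ((#(K \ I) : ℤ) - 2)) / x +
      (∑ I ∈ K.powerset, hurwitzTerm l y I *
        (x + ∑ j ∈ K \ I, l j) ^ ((#(K \ I) : ℤ) - 2)) / y := by
  have compl : ∑ I ∈ K.powerset, hurwitzTerm l y I *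
        (x + ∑ j ∈ K \ I, l j) ^ ((#(K \ I) : ℤ) - 2) =
      ∑ I ∈ K.powerset, hurwitzTerm l y (K \ I) * (x + ∑ j ∈ I, l j) ^ ((#I : ℤ) - 2) := by
    refine sum_nbij' (K \ ·) (K \ ·) ?_ ?_ ?_ ?_ ?_ <;> simp +contextual
  rw [compl, splitSum, mul_sum, sum_div, sum_div, ← sum_add_distrib]
  refine sum_congr rfl fun I hI => ?_
  have hX := (add_sum_pos hl hx I).ne'
  have hY := (add_sum_pos hl hy (K \ I)).ne'
  have total : x + y + ∑ i ∈ K, l i = (x + ∑ i ∈ I, l i) + (y + ∑ i ∈ K \ I, l i) := by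
    rw [← sum_sdiff (mem_powerset.1 hI)]; ring
  rw [total, hurwitzTerm_eq_mul_zpow l hx.ne', hurwitzTerm_eq_mul_zpow l hy.ne',
    show (#I : ℤ) - 1 = #I - 2 + 1 by ring, zpow_add_one₀ hX,
    show (#(K \ I) : ℤ) - 1 = #(K \ I) - 2 + 1 by ring, zpow_add_one₀ hY]
  field_simp

theorem splitSum_eq (hl : ∀ i, 0 ≤ l i) (hx : 0 < x) (hy : 0 < y) (K : Finset ι) :
    splitSum l K x y = (x + y + ∑ i ∈ K, l i) ^ ((#K : ℤ) - 3) / (x * y) *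
      ((x + y + ∑ i ∈ K, l i) * (x + y) ^ 2 / (x * y) -
        ∑ j ∈ K, l j * (x + y + l j) * (1 / (x + l j) + 1 / (y + l j))) := by
  set n := x + y + ∑ i ∈ K, l i with hn
  have hn0 : n ≠ 0 := (add_sum_pos hl (add_pos hx hy) K).ne'
  have whole : hurwitzTerm l (x + y) K = (x + y) * n ^ 2 * n ^ ((#K : ℤ) - 3) := by
    rw [hurwitzTerm_eq_mul_zpow l (add_pos hx hy).ne', mul_assoc, ← zpow_natCast n 2,
      ← zpow_add₀ hn0]
    congr 2
    push_cast
    ring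
  have erase : ∀ j ∈ K, hurwitzTerm l (x + y + l j) (K.erase j) =
      (x + y + l j) * n * n ^ ((#K : ℤ) - 3) := fun j hj => by
    rw [hurwitzTerm_eq_mul_zpow l (add_pos_of_pos_of_nonneg (add_pos hx hy) (hl j)).ne',
      add_assoc (x + y), add_sum_erase _ _ hj, cast_card_erase_of_mem hj, mul_assoc, ← hn,
      ← zpow_one_add₀ hn0]
    congr 2
    ring
  have half : ∀ z : k, 0 < z →
      ∑ j ∈ K, l j / (z * (z + l j)) * hurwitzTerm l (x + y + l j) (K.erase j) =
        n * n ^ ((#K : ℤ) - 3) / z * ∑ j ∈ K, l j * (x + y + l j) * (1 / (z + l j)) := by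
    intro z hz
    rw [mul_sum]
    refine sum_congr rfl fun j hj => ?_
    have hzj : z + l j ≠ 0 := (add_pos_of_pos_of_nonneg hz (hl j)).ne'
    rw [erase j hj]
    field_simp
  have h := mul_splitSum hl hx hy K
  rw [sum_hurwitzTerm_mul_zpow hl hy, sum_hurwitzTerm_mul_zpow hl hx, add_comm y x, whole,
    half x hx, half y hy] at h
  refine mul_left_cancel₀ hn0 (h.trans ?_)
  simp only [mul_add, sum_add_distrib]
  field_simp
  ring

end SplitSum

section AbelSums

open Finset

open scoped Nat

noncomputable section

/-- The coefficient of `z ^ n` in `1 / (1 - T)`, where `T` is the tree function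
`∑ n ^ (n - 1) z ^ n / n!`. -/
def abelCoeff (n : ℕ) : ℚ := (n : ℚ) ^ n / n !

/-- The coefficient of `z ^ b` in the power `T ^ j` of the tree function, for `j ≤ b`. -/
def treePowCoeff (j b : ℕ) : ℚ := j * (b : ℚ) ^ ((b : ℤ) - j - 1) / (b - j)!

/-- The convolution of the `abelCoeff`s, with an additional denominator linear in one of the
indices. -/
def abelSum (p q : ℕ) : ℚ := ∑ b ∈ Ico 1 p, abelCoeff b * abelCoeff (p - b) / (b + q)

end

@[simp]
theorem abelCoeff_zero : abelCoeff 0 = 1 := by simp [abelCoeff]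

theorem abelCoeff_pos (n : ℕ) : 0 < abelCoeff n := by
  rcases n.eq_zero_or_pos with rfl | hn
  · simp
  · unfold abelCoeff; positivity

theorem abelSum_eq_sum_sub (p q : ℕ) :
    abelSum p q = ∑ b ∈ Ico 1 p, abelCoeff b * abelCoeff (p - b) / ((p - b : ℕ) + q) := by
  have reflect := sum_Ico_reflect (fun b => abelCoeff b * abelCoeff (p - b) / (b + q)) 1 p.le_succ
  rw [Nat.add_sub_cancel_left, Nat.add_sub_cancel] at reflect
  rw [abelSum, ← reflect]
  refine sum_congr rfl fun b hb => ?_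
  rw [Nat.sub_sub_self (mem_Ico.1 hb).2.le, mul_comm (abelCoeff b)]

theorem abel_binomial {x : ℚ} (hx : x ≠ 0) (y : ℚ) (n : ℕ) :
    ∑ c ∈ range (n + 1), (n.choose c : ℚ) *
      (x * (x + c) ^ ((c : ℤ) - 1) * (y + (n - c : ℕ)) ^ (n - c)) = (x + y + n) ^ n := by
  have h := sum_hurwitzTerm_mul_pow (fun _ : ℕ => (1 : ℚ)) x y (range n)
  simp only [hurwitzTerm_eq_mul_zpow _ hx, sum_const, nsmul_one, card_range] at h
  have by_card := sum_powerset_apply_card (fun c : ℕ =>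
    x * (x + c) ^ ((c : ℤ) - 1) * (y + (n - c : ℕ)) ^ (n - c)) (x := range n)
  simp only [card_range, nsmul_eq_mul] at by_card
  rw [← h, ← by_card]
  exact sum_congr rfl fun I hI => by rw [card_sdiff_of_subset (mem_powerset.1 hI), card_range]

theorem sum_abelCoeff_mul_treePowCoeff {j p : ℕ} (hj : 0 < j) (hp : j ≤ p) :
    ∑ b ∈ Ico j (p + 1), abelCoeff (p - b) * treePowCoeff j b = (p : ℚ) ^ (p - j) / (p - j)! := by
  obtain ⟨n, rfl⟩ := Nat.exists_eq_add_of_le hp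
  have abel := abel_binomial (x := j) (by positivity) 0 n
  simp only [zero_add, add_zero] at abel
  rw [sum_Ico_eq_sum_range, Nat.add_sub_cancel_left, show j + n + 1 - j = n + 1 by omega,
    Nat.cast_add, ← abel, sum_div]
  refine sum_congr rfl fun c hc => ?_
  rw [show j + n - (j + c) = n - c by omega, abelCoeff, treePowCoeff, Nat.add_sub_cancel_left,
    Nat.cast_choose ℚ (mem_range_succ_iff.1 hc),
    show ((j + c : ℕ) : ℤ) - j - 1 = c - 1 by push_cast; ring]
  push_cast
  field_simp

theorem sum_range_treePowCoeff_mul {b q t : ℕ} (hb : 0 < b) (ht : t ≤ b) :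
    (∑ j ∈ range t, treePowCoeff j b * ((q : ℚ) ^ (q + j) / (q + j)!)) * (b + q) =
      q * abelCoeff q * abelCoeff b -
        (b : ℚ) ^ (b - t) * (q : ℚ) ^ (q + t) * (q + t) / ((b - t)! * (q + t)!) := by
  induction t with
  | zero =>
    simp only [range_zero, sum_empty, abelCoeff, Nat.sub_zero, Nat.add_zero, Nat.cast_zero]
    field_simp
    ring
  | succ t ih =>
    obtain ⟨d, rfl⟩ := Nat.exists_eq_add_of_le ht
    rw [sum_range_succ, add_mul, ih (by omega), treePowCoeff,
      show t + 1 + d - t = d + 1 by omega, Nat.add_sub_cancel_left,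
      show ((t + 1 + d : ℕ) : ℤ) - t - 1 = (d : ℕ) by push_cast; ring, zpow_natCast,
      Nat.factorial_succ d, ← add_assoc q t 1, Nat.factorial_succ (q + t)]
    push_cast
    field_simp
    ring

theorem sum_treePowCoeff_mul {b q : ℕ} (hb : 0 < b) :
    ∑ j ∈ Ico 1 (b + 1), treePowCoeff j b * ((q : ℚ) ^ (q + j) / (q + j)!) =
      q * abelCoeff q * abelCoeff b / (b + q) := by
  have drop_zero : ∑ j ∈ Ico 1 (b + 1), treePowCoeff j b * ((q : ℚ) ^ (q + j) / (q + j)!) =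
      ∑ j ∈ range (b + 1), treePowCoeff j b * ((q : ℚ) ^ (q + j) / (q + j)!) := by
    rw [range_eq_Ico, sum_eq_sum_Ico_succ_bot b.succ_pos]
    simp [treePowCoeff]
  have top : treePowCoeff b b = 1 := by
    simp [treePowCoeff, hb.ne']
  rw [drop_zero, sum_range_succ, eq_div_iff (by positivity), add_mul,
    sum_range_treePowCoeff_mul hb le_rfl, top]
  simp only [Nat.sub_self, pow_zero, Nat.factorial_zero, Nat.cast_one]
  field_simp
  ring

/-- Both sides are the coefficient extraction of `∑ j, T ^ j / (1 - T) * q ^ (q + j) / (q + j)!`. -/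
theorem mul_abelSum_add {p q : ℕ} (hp : 0 < p) :
    q * abelCoeff q * (abelSum p q + abelCoeff p / (p + q)) =
      ∑ j ∈ Ico 1 (p + 1), (p : ℚ) ^ (p - j) / (p - j)! * ((q : ℚ) ^ (q + j) / (q + j)!) := by
  calc q * abelCoeff q * (abelSum p q + abelCoeff p / (p + q))
      = ∑ b ∈ Ico 1 (p + 1), abelCoeff (p - b) * (q * abelCoeff q * abelCoeff b / (b + q)) := by
        rw [sum_Ico_succ_top hp, Nat.sub_self, abelCoeff_zero, abelSum, mul_add, mul_sum]
        congr 1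
        · exact sum_congr rfl fun b _ => by ring
        · ring
    _ = ∑ b ∈ Ico 1 (p + 1), ∑ j ∈ Ico 1 (b + 1), abelCoeff (p - b) * treePowCoeff j b *
          ((q : ℚ) ^ (q + j) / (q + j)!) := by
        refine sum_congr rfl fun b hb => ?_
        rw [← sum_treePowCoeff_mul (mem_Ico.1 hb).1, mul_sum]
        simp only [mul_assoc]
    _ = ∑ j ∈ Ico 1 (p + 1), ∑ b ∈ Ico j (p + 1), abelCoeff (p - b) * treePowCoeff j b *
          ((q : ℚ) ^ (q + j) / (q + j)!) :=
        sum_comm' fun b j => by simp only [mem_Ico]; omega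
    _ = _ := by
        refine sum_congr rfl fun j hj => ?_
        obtain ⟨hj, hjp⟩ := mem_Ico.1 hj
        rw [← sum_mul, sum_abelCoeff_mul_treePowCoeff hj (Nat.lt_succ_iff.1 hjp)]

theorem abelCoeff_add (p q : ℕ) :
    abelCoeff (p + q) = abelCoeff p * abelCoeff q +
      ∑ j ∈ Ico 1 (p + 1), (p : ℚ) ^ (p - j) / (p - j)! * ((q : ℚ) ^ (q + j) / (q + j)!) +
      ∑ j ∈ Ico 1 (q + 1), (q : ℚ) ^ (q - j) / (q - j)! * ((p : ℚ) ^ (p + j) / (p + j)!) := by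
  have binomial : abelCoeff (p + q) = ∑ i ∈ range (p + 1 + q),
      (p : ℚ) ^ i / i ! * ((q : ℚ) ^ (p + q - i) / (p + q - i)!) := by
    rw [abelCoeff, Nat.cast_add, add_pow, sum_div, add_right_comm]
    refine sum_congr rfl fun i hi => ?_
    rw [Nat.cast_choose ℚ (by have := mem_range.1 hi; omega)]
    field_simp
  rw [binomial, sum_range_add, ← sum_range_reflect, sum_range_succ', sum_Ico_eq_sum_range,
    sum_Ico_eq_sum_range, add_comm (abelCoeff p * abelCoeff q)]
  refine congrArg₂ _ (congrArg₂ _ ?_ ?_) ?_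
  · refine sum_congr rfl fun j hj => ?_
    have := mem_range.1 hj
    rw [show p + 1 - 1 - (j + 1) = p - (1 + j) by omega,
      show p + q - (p - (1 + j)) = q + (1 + j) by omega]
  · simp only [Nat.add_sub_cancel, Nat.sub_zero, Nat.add_sub_cancel_left, abelCoeff]
  · refine sum_congr rfl fun j _ => ?_
    rw [show p + q - (p + 1 + j) = q - (1 + j) by omega, add_assoc, mul_comm]

theorem two_mul_abelCoeff_mul_add_abelSum {p q : ℕ} (hp : 0 < p) (hq : 0 < q) :
    2 * abelCoeff p * abelCoeff q + q * abelCoeff q * abelSum p q + p * abelCoeff p * abelSum q p =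
      abelCoeff (p + q) := by
  rw [abelCoeff_add, ← mul_abelSum_add hp, ← mul_abelSum_add hq]
  field_simp
  ring

theorem abelSum_zero_right {n : ℕ} (hn : 0 < n) : abelSum n 0 = (n - 1) / n * abelCoeff n := by
  have linear : ∀ b ∈ Ico 1 (n + 1),
      abelCoeff (n - b) * treePowCoeff 1 b = abelCoeff b * abelCoeff (n - b) / (b + (0 : ℕ)) := by
    intro b hb
    obtain ⟨c, rfl⟩ := Nat.exists_eq_add_of_le' (mem_Ico.1 hb).1
    rw [treePowCoeff, abelCoeff.eq_def (c + 1), Nat.add_sub_cancel, Nat.factorial_succ,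
      show ((c + 1 : ℕ) : ℤ) - (1 : ℕ) - 1 = (c + 1 : ℕ) - 2 by push_cast; ring,
      zpow_sub₀ (by positivity), zpow_natCast]
    push_cast
    field_simp
    norm_num
  have top : (n : ℚ) ^ (n - 1) / (n - 1)! = abelCoeff n := by
    obtain ⟨c, rfl⟩ := Nat.exists_eq_add_of_le' hn
    rw [abelCoeff, Nat.add_sub_cancel, Nat.factorial_succ, pow_succ]
    push_cast
    field_simp
  have h := sum_abelCoeff_mul_treePowCoeff one_pos hn
  rw [sum_congr rfl linear, sum_Ico_succ_top hn, top, Nat.sub_self, abelCoeff_zero] at h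
  rw [abelSum, eq_sub_of_add_eq h, Nat.cast_zero, add_zero]
  field_simp

theorem sum_abelCoeff_mul_div_mul (n : ℕ) :
    ∑ b ∈ Ico 1 n, abelCoeff b * abelCoeff (n - b) / (b * (n - b : ℕ)) = 2 / n * abelSum n 0 := by
  rw [show 2 / (n : ℚ) * abelSum n 0 = (abelSum n 0 + abelSum n 0) / n by ring]
  nth_rw 2 [abelSum_eq_sum_sub]
  rw [abelSum, ← sum_add_distrib, sum_div]
  refine sum_congr rfl fun b hb => ?_
  obtain ⟨hb, hbn⟩ := mem_Ico.1 hb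
  obtain ⟨c, rfl⟩ := Nat.exists_eq_add_of_lt hbn
  rw [show b + c + 1 - b = c + 1 by omega]
  push_cast
  field_simp
  ring

end AbelSums

section BlockIdentity

open Finset

/-- The contribution of a cycle of length `k` to the number of minimal transitive
factorizations. -/
noncomputable def cycleWeight (k : ℕ) : ℚ := k * abelCoeff k

theorem cycleWeight_pos {k : ℕ} (hk : 0 < k) : 0 < cycleWeight k := by
  have := abelCoeff_pos k
  unfold cycleWeight
  positivity

theorem cycleWeight_one : cycleWeight 1 = 1 := by simp [cycleWeight, abelCoeff]

variable {ι : Type*} [DecidableEq ι] (s : ι → ℕ)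

theorem cycleWeight_mul_splitSum (K : Finset ι) {a b : ℕ} (ha : 0 < a) (hb : 0 < b) {n : ℚ}
    (hn : n = a + b + ∑ j ∈ K, (s j : ℚ)) :
    cycleWeight a * cycleWeight b / cycleWeight (a + b) *
        splitSum (fun j => (s j : ℚ)) K a b / n ^ ((#K : ℤ) - 2) =
      (a + b) / abelCoeff (a + b) * (abelCoeff a * abelCoeff b / (a * b)) -
        (∑ j ∈ K, s j * (a + b + s j) * (1 / (a + s j) + 1 / (b + s j) : ℚ)) *
          (abelCoeff a * abelCoeff b) / ((a + b) * abelCoeff (a + b) * n) := by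
  have hn0 : n ≠ 0 := hn ▸
    (add_sum_pos (l := fun j => (s j : ℚ)) (fun j => by positivity) (by positivity) K).ne'
  have hA := (abelCoeff_pos (a + b)).ne'
  rw [splitSum_eq (fun j => by positivity) (by positivity) (by positivity), ← hn,
    show (#K : ℤ) - 2 = #K - 3 + 1 by ring, zpow_add_one₀ hn0]
  unfold cycleWeight
  push_cast
  field_simp

theorem sum_cycleWeight_mul_splitSum (K : Finset ι) {c : ℕ} (hc : 0 < c) {n : ℚ}
    (hn : n = c + ∑ j ∈ K, (s j : ℚ)) :
    c * ∑ a ∈ Ico 1 c, cycleWeight a * cycleWeight (c - a) / cycleWeight c *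
        splitSum (fun j => (s j : ℚ)) K a (c - a : ℕ) / n ^ ((#K : ℤ) - 2) =
      2 * (c - 1) -
        2 / n * ∑ j ∈ K, (c + s j : ℚ) * (s j * abelSum c (s j) / abelCoeff c) := by
  have hn0 : n ≠ 0 := hn ▸
    (add_sum_pos (l := fun j => (s j : ℚ)) (fun j => by positivity) (by positivity) K).ne'
  have hA := (abelCoeff_pos c).ne'
  have summand : ∀ a ∈ Ico 1 c, cycleWeight a * cycleWeight (c - a) / cycleWeight c *
        splitSum (fun j => (s j : ℚ)) K a (c - a : ℕ) / n ^ ((#K : ℤ) - 2) =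
      c / abelCoeff c * (abelCoeff a * abelCoeff (c - a) / (a * (c - a : ℕ))) -
        ∑ j ∈ K, s j * (c + s j) / (c * abelCoeff c * n) *
          (abelCoeff a * abelCoeff (c - a) / (a + s j) +
            abelCoeff a * abelCoeff (c - a) / ((c - a : ℕ) + s j)) := by
    intro a ha
    obtain ⟨ha0, hac⟩ := mem_Ico.1 ha
    obtain ⟨b, rfl⟩ := Nat.exists_eq_add_of_le hac.le
    rw [Nat.add_sub_cancel_left, cycleWeight_mul_splitSum s K ha0 (by omega) (by simpa using hn),
      sum_mul, sum_div]
    push_cast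
    congr 1
    exact sum_congr rfl fun j _ => by ring
  rw [sum_congr rfl summand, sum_sub_distrib, ← mul_sum, sum_abelCoeff_mul_div_mul,
    abelSum_zero_right hc, sum_comm]
  simp only [← mul_sum, sum_add_distrib, ← abelSum_eq_sum_sub]
  simp only [← abelSum.eq_def]
  rw [mul_sub, mul_sum, mul_sum]
  congr 1
  · field_simp
  · refine sum_congr rfl fun j _ => ?_
    field_simp
    ring

theorem sum_sum_erase_comm {M : Type*} [AddCommMonoid M] (K : Finset ι) (f : ι → ι → M) :
    ∑ i ∈ K, ∑ j ∈ K.erase i, f i j = ∑ i ∈ K, ∑ j ∈ K.erase i, f j i :=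
  sum_comm' fun i j => by simp only [mem_erase]; tauto

theorem sum_sum_erase_add {R : Type*} [CommRing R] (K : Finset ι) (f : ι → R) :
    ∑ i ∈ K, ∑ j ∈ K.erase i, (f i + f j) = 2 * (#K - 1) * ∑ i ∈ K, f i := by
  have inner : ∀ i ∈ K, ∑ j ∈ K.erase i, (f i + f j) = (#K - 2) * f i + ∑ j ∈ K, f j := by
    intro i hi
    rw [sum_add_distrib, sum_const, nsmul_eq_mul, cast_card_erase_of_mem hi, ← add_sum_erase _ _ hi]
    ring
  rw [sum_congr rfl inner, sum_add_distrib, ← mul_sum, sum_const, nsmul_eq_mul]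
  ring

theorem cycleWeight_add_div {p q : ℕ} (hp : 0 < p) (hq : 0 < q) :
    (p * q : ℚ) * (cycleWeight (p + q) / (cycleWeight p * cycleWeight q)) =
      (p + q) * (2 + q * abelSum p q / abelCoeff p + p * abelSum q p / abelCoeff q) := by
  have hAp := (abelCoeff_pos p).ne'
  have hAq := (abelCoeff_pos q).ne'
  unfold cycleWeight
  rw [← two_mul_abelCoeff_mul_add_abelSum hp hq]
  push_cast
  field_simp

/-- The numerical content of the recursion for Hurwitz numbers: within one block of total size `n`,
joining two cycles and cutting one cycle contribute `2 (n + |K| - 2)` in total. -/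
theorem sum_join_add_sum_cut {K : Finset ι} (hs : ∀ i ∈ K, 0 < s i) (hK : K.Nonempty) {n : ℚ}
    (hn : n = ∑ i ∈ K, (s i : ℚ)) :
    ∑ i ∈ K, ∑ j ∈ K.erase i,
        (s i * s j : ℚ) * (cycleWeight (s i + s j) / (cycleWeight (s i) * cycleWeight (s j))) / n +
      ∑ i ∈ K, s i * ∑ a ∈ Ico 1 (s i),
        cycleWeight a * cycleWeight (s i - a) / cycleWeight (s i) *
          splitSum (fun j => (s j : ℚ)) (K.erase i) a (s i - a : ℕ) / n ^ ((#K : ℤ) - 3) =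
    2 * (n + #K - 2) := by
  have hn0 : n ≠ 0 := hn ▸ (sum_pos (fun i hi => Nat.cast_pos.2 (hs i hi)) hK).ne'
  set u : ι → ι → ℚ := fun i j => (s i + s j) * (s j * abelSum (s i) (s j) / abelCoeff (s i))
  have cut : ∀ i ∈ K, s i * ∑ a ∈ Ico 1 (s i),
      cycleWeight a * cycleWeight (s i - a) / cycleWeight (s i) *
        splitSum (fun j => (s j : ℚ)) (K.erase i) a (s i - a : ℕ) / n ^ ((#K : ℤ) - 3) =
      2 * (s i - 1) - 2 / n * ∑ j ∈ K.erase i, u i j := fun i hi => by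
    rw [← sum_cycleWeight_mul_splitSum s (K.erase i) (hs i hi)
      (by rw [hn, add_sum_erase _ (fun j => (s j : ℚ)) hi]), cast_card_erase_of_mem hi]
    simp only [sub_sub]
    norm_num
  have join : ∀ i ∈ K, ∀ j ∈ K.erase i,
      (s i * s j : ℚ) * (cycleWeight (s i + s j) / (cycleWeight (s i) * cycleWeight (s j))) / n =
        (2 * (s i + s j) + u i j + u j i) / n := fun i hi j hj => by
    rw [cycleWeight_add_div (hs i hi) (hs j (mem_of_mem_erase hj))]
    simp only [u]
    ring
  rw [sum_congr rfl cut, sum_congr rfl fun i hi => sum_congr rfl (join i hi)]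
  simp only [← sum_div, sum_add_distrib, sum_sub_distrib, ← mul_sum, sum_const, nsmul_eq_mul]
  have sum_add := sum_sum_erase_add K fun i => (s i : ℚ)
  simp only [sum_add_distrib, sum_const, nsmul_eq_mul] at sum_add
  rw [sum_sum_erase_comm K fun i j => u j i, sum_add, ← hn]
  field_simp
  ring

end BlockIdentity

section Blocks

open Finset

variable {α : Type*} [Fintype α] [DecidableEq α]

noncomputable section

open Classical in
/-- The equivalence classes of `r`, as finite sets. -/
def blocks (r : Setoid α) : Finset (Finset α) := (Finpartition.ofSetoid r).parts

open Classical in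
/-- The equivalence class of `x` with respect to `r`, as a finite set. -/
def block (r : Setoid α) (x : α) : Finset α := (Finpartition.ofSetoid r).part x

/-- The equivalence classes of `s` contained in `B`. -/
def blocksIn (s : Setoid α) (B : Finset α) : Finset (Finset α) := {C ∈ blocks s | C ⊆ B}

end

variable {r s : Setoid α} {x y : α} {B C : Finset α}

@[simp]
theorem mem_block : y ∈ block r x ↔ r x y := by
  classical exact Finpartition.mem_part_ofSetoid_iff_rel

@[simp]
theorem block_mem_blocks : block r x ∈ blocks r := by
  classical exact (Finpartition.ofSetoid r).part_mem.2 (mem_univ x)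

theorem self_mem_block : x ∈ block r x := mem_block.2 (r.refl x)

theorem block_eq_of_mem (hB : B ∈ blocks r) (hx : x ∈ B) : block r x = B := by
  classical exact (Finpartition.ofSetoid r).part_eq_of_mem hB hx

theorem exists_block_eq (hB : B ∈ blocks r) : ∃ x ∈ B, block r x = B := by
  classical
  obtain ⟨x, hx⟩ := (Finpartition.ofSetoid r).nonempty_of_mem_parts hB
  exact ⟨x, hx, block_eq_of_mem hB hx⟩

theorem blocks_card_pos (hB : B ∈ blocks r) : 0 < #B :=
  let ⟨x, hx, _⟩ := exists_block_eq hB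
  card_pos.2 ⟨x, hx⟩

theorem mem_blocks : B ∈ blocks r ↔ ∃ x, block r x = B :=
  ⟨fun hB => let ⟨x, _, hx⟩ := exists_block_eq hB; ⟨x, hx⟩, fun ⟨_, hx⟩ => hx ▸ block_mem_blocks⟩

theorem block_eq_block : block r x = block r y ↔ r x y :=
  ⟨fun h => mem_block.1 (h ▸ self_mem_block), fun h => block_eq_of_mem block_mem_blocks
    (mem_block.2 (r.symm h))⟩

theorem block_ne_block (h : ¬r x y) : block r y ≠ block r x :=
  fun e => h (r.symm (block_eq_block.1 e))

theorem block_subset_block (h : s ≤ r) (x : α) : block s x ⊆ block r x :=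
  fun _ hy => mem_block.2 (h (mem_block.1 hy))

theorem block_subset_iff (hsr : s ≤ r) (hB : B ∈ blocks r) : block s x ⊆ B ↔ x ∈ B :=
  ⟨fun h => h self_mem_block, fun h => block_eq_of_mem hB h ▸ block_subset_block hsr x⟩

theorem disjoint_blocks (hB : B ∈ blocks r) (hC : C ∈ blocks r) (h : B ≠ C) : Disjoint B C := by
  classical exact (Finpartition.ofSetoid r).disjoint hB hC h

theorem mem_blocksIn : C ∈ blocksIn s B ↔ C ∈ blocks s ∧ C ⊆ B := mem_filter

theorem blocksIn_card_pos (hC : C ∈ blocksIn s B) : 0 < #C :=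
  blocks_card_pos (mem_blocksIn.1 hC).1

theorem block_mem_blocksIn (hsr : s ≤ r) (hB : B ∈ blocks r) (hx : x ∈ B) :
    block s x ∈ blocksIn s B :=
  mem_blocksIn.2 ⟨block_mem_blocks, (block_subset_iff hsr hB).2 hx⟩

theorem sum_mem_eq_sum_blocksIn {M : Type*} [AddCommMonoid M] (hsr : s ≤ r) (hB : B ∈ blocks r)
    (f : α → M) : ∑ x ∈ B, f x = ∑ C ∈ blocksIn s B, ∑ x ∈ C, f x := by
  rw [← sum_fiberwise_of_maps_to (g := block s) fun x hx => block_mem_blocksIn hsr hB hx]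
  refine sum_congr rfl fun C hC => ?_
  obtain ⟨hC, hCB⟩ := mem_blocksIn.1 hC
  congr 1
  ext x
  rw [mem_filter]
  exact ⟨fun h => h.2 ▸ self_mem_block, fun h => ⟨hCB h, block_eq_of_mem hC h⟩⟩

theorem sum_sdiff_eq_sum_blocksIn_erase {M : Type*} [AddCancelCommMonoid M] (hsr : s ≤ r)
    (hB : B ∈ blocks r) (hC : C ∈ blocksIn s B) (f : α → M) :
    ∑ x ∈ B \ C, f x = ∑ D ∈ (blocksIn s B).erase C, ∑ x ∈ D, f x := by
  have hsum := sum_mem_eq_sum_blocksIn hsr hB f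
  rw [← add_sum_erase _ _ hC, ← sum_sdiff (mem_blocksIn.1 hC).2, add_comm] at hsum
  exact add_left_cancel hsum

theorem sum_eq_sum_blocks {M : Type*} [AddCommMonoid M] (r : Setoid α) (f : α → M) :
    ∑ x, f x = ∑ B ∈ blocks r, ∑ x ∈ B, f x := by
  classical
  have h := sum_biUnion (f := f) (Finpartition.ofSetoid r).disjoint
  rwa [← sup_eq_biUnion, (Finpartition.ofSetoid r).sup_parts] at h

theorem sum_card_blocksIn (hsr : s ≤ r) (hB : B ∈ blocks r) : ∑ C ∈ blocksIn s B, #C = #B := by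
  simp only [card_eq_sum_ones, ← sum_mem_eq_sum_blocksIn hsr hB]

theorem sum_card_blocks (r : Setoid α) : ∑ B ∈ blocks r, #B = Fintype.card α := by
  simp only [card_eq_sum_ones, ← sum_eq_sum_blocks, Fintype.card_eq_sum_ones]

theorem sum_card_blocksIn_blocks (hsr : s ≤ r) : ∑ B ∈ blocks r, #(blocksIn s B) = #(blocks s) := by
  simp only [blocksIn, card_eq_sum_ones (blocks s), card_filter]
  rw [sum_comm]
  refine sum_congr rfl fun C hC => ?_
  obtain ⟨x, _, rfl⟩ := exists_block_eq hC
  rw [sum_eq_single_of_mem _ block_mem_blocks, if_pos (block_subset_block hsr x)]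
  intro B hB hne
  rw [if_neg fun h => hne (block_eq_of_mem hB (h self_mem_block)).symm]

theorem card_blocks_le_of_le (h : s ≤ r) : #(blocks r) ≤ #(blocks s) := by
  rw [← sum_card_blocksIn_blocks h, card_eq_sum_ones]
  refine sum_le_sum fun B hB => card_pos.2 ?_
  obtain ⟨x, hx, _⟩ := exists_block_eq hB
  exact ⟨_, block_mem_blocksIn h hB hx⟩

end Blocks

section JoinCut

open Finset

/-- The finest equivalence relation coarser than `r` that relates `x` and `y`. -/
def join {α : Type*} (r : Setoid α) (x y : α) : Setoid α where
  r a b := r a b ∨ (r a x ∨ r a y) ∧ (r b x ∨ r b y)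
  iseqv :=
    { refl := fun a => .inl (r.refl a)
      symm := fun h => h.imp r.symm And.symm
      trans := by
        have class_of_rel {a b : α} (hab : r a b) : r a x ∨ r a y ↔ r b x ∨ r b y :=
          or_congr ⟨r.trans (r.symm hab), r.trans hab⟩ ⟨r.trans (r.symm hab), r.trans hab⟩
        rintro a b c (hab | ⟨ha, hb⟩) (hbc | ⟨_, hc⟩)
        · exact .inl (r.trans hab hbc)
        · exact .inr ⟨(class_of_rel hab).2 ‹_›, hc⟩
        · exact .inr ⟨ha, (class_of_rel hbc).1 hb⟩
        · exact .inr ⟨ha, hc⟩ }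

/-- The coarsest equivalence relation finer than `r` that separates `S` from its complement. -/
def cut {α : Type*} (r : Setoid α) (S : Finset α) : Setoid α := r ⊓ Setoid.ker (· ∈ S)

section Order

variable {α : Type*} {r s t : Setoid α} {x y a b : α} {S : Finset α}

theorem join_apply : join r x y a b ↔ r a b ∨ (r a x ∨ r a y) ∧ (r b x ∨ r b y) := Iff.rfl

theorem le_join : r ≤ join r x y := fun _ _ => .inl

theorem join_rel : join r x y x y := .inr ⟨.inl (r.refl x), .inr (r.refl y)⟩

theorem join_le_iff : join r x y ≤ s ↔ r ≤ s ∧ s x y := by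
  refine ⟨fun h => ⟨le_join.trans h, h join_rel⟩, fun ⟨hrs, hxy⟩ a b => ?_⟩
  have to_x {c : α} : r c x ∨ r c y → s c x := fun h =>
    h.elim (fun hx => hrs hx) fun hy => s.trans (hrs hy) (s.symm hxy)
  rintro (hab | ⟨ha, hb⟩)
  · exact hrs hab
  · exact s.trans (to_x ha) (s.symm (to_x hb))

theorem join_eq_self (h : r x y) : join r x y = r := le_antisymm (join_le_iff.2 ⟨le_rfl, h⟩) le_join

theorem cut_apply : cut r S a b ↔ r a b ∧ (a ∈ S ↔ b ∈ S) := by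
  rw [cut, Setoid.inf_iff_and, Setoid.ker_def, eq_iff_iff]

theorem le_cut_iff : t ≤ cut r S ↔ t ≤ r ∧ ∀ a b, t a b → (a ∈ S ↔ b ∈ S) :=
  ⟨fun h => ⟨h.trans inf_le_left, fun _ _ hab => (cut_apply.1 (h hab)).2⟩,
    fun h _ _ hab => cut_apply.2 ⟨h.1 hab, h.2 _ _ hab⟩⟩

end Order

variable {α : Type*} [Fintype α] [DecidableEq α] {r : Setoid α} {x y : α} {S : Finset α}

theorem join_cut (hS : S ⊆ block r x) (hx : x ∈ S) (hy : y ∉ S) (hxy : r x y) :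
    join (cut r S) x y = r := by
  refine le_antisymm (join_le_iff.2 ⟨inf_le_left, hxy⟩) fun a b hab => join_apply.2 ?_
  have side {c : α} (hc : r c x) : cut r S c x ∨ cut r S c y := by
    by_cases h : c ∈ S <;> simp [cut_apply, h, hx, hy, hc, r.trans hc hxy]
  have hSr {c : α} (h : c ∈ S) : r c x := r.symm (mem_block.1 (hS h))
  rw [cut_apply]
  by_cases ha : a ∈ S
  · exact .inr ⟨side (hSr ha), side (r.trans (r.symm hab) (hSr ha))⟩
  · by_cases hb : b ∈ S
    · exact .inr ⟨side (r.trans hab (hSr hb)), side (hSr hb)⟩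
    · exact .inl ⟨hab, by simp [ha, hb]⟩

theorem cut_join : cut (join r x y) (block r x) = r := by
  ext a b
  rw [cut_apply, join_apply, mem_block, mem_block]
  constructor
  · rintro ⟨hab | ⟨hax | hay, hb⟩, hiff⟩
    · exact hab
    · exact r.trans hax (hiff.1 (r.symm hax))
    · rcases hb with hbx | hby
      · exact r.trans (r.symm (hiff.2 (r.symm hbx))) (r.symm hbx)
      · exact r.trans hay (r.symm hby)
  · exact fun hab => ⟨.inl hab, fun h => r.trans h hab, fun h => r.trans h (r.symm hab)⟩

theorem block_cut (hS : S ⊆ block r x) (hx : x ∈ S) : block (cut r S) x = S := by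
  ext a
  rw [mem_block, cut_apply]
  exact ⟨fun h => h.2.1 hx, fun ha => ⟨mem_block.1 (hS ha), by simp [hx, ha]⟩⟩

theorem block_join_left : block (join r x y) x = block r x ∪ block r y := by
  ext a
  simp only [mem_block, mem_union, join_apply, r.refl x, true_or, true_and]
  rw [r.comm' (x := a) (y := x), r.comm' (x := a) (y := y), ← or_assoc, or_self]

theorem block_join_of_not_rel {a : α} (hx : ¬r a x) (hy : ¬r a y) :
    block (join r x y) a = block r a := by
  ext b
  simp only [mem_block, join_apply, hx, hy, or_self, false_and, or_false]

theorem blocks_join : blocks (join r x y) =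
    insert (block r x ∪ block r y) (((blocks r).erase (block r x)).erase (block r y)) := by
  ext B
  rw [mem_insert, mem_erase, mem_erase, mem_blocks]
  constructor
  · rintro ⟨a, rfl⟩
    by_cases h : r a x ∨ r a y
    · left
      rw [← block_join_left, block_eq_block]
      exact .inr ⟨h, .inl (r.refl x)⟩
    · obtain ⟨hx, hy⟩ := not_or.1 h
      right
      rw [block_join_of_not_rel hx hy, Ne, Ne, block_eq_block, block_eq_block]
      exact ⟨hy, hx, block_mem_blocks⟩
  · rintro (rfl | ⟨hy, hx, hB⟩)
    · exact ⟨x, block_join_left⟩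
    · obtain ⟨a, _, rfl⟩ := exists_block_eq hB
      rw [Ne, block_eq_block] at hx hy
      exact ⟨a, block_join_of_not_rel hx hy⟩

theorem block_union_block_notMem_blocks (h : ¬r x y) : block r x ∪ block r y ∉ blocks r := by
  intro hmem
  have hx := block_eq_of_mem hmem (mem_union_left _ self_mem_block)
  exact h (mem_block.1 (hx ▸ mem_union_right _ self_mem_block))

theorem card_block_join (h : ¬r x y) :
    #(block (join r x y) x) = #(block r x) + #(block r y) := by
  rw [block_join_left, card_union_of_disjoint
    (disjoint_blocks block_mem_blocks block_mem_blocks (block_ne_block h).symm)]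

@[to_additive]
theorem prod_blocks_join {M : Type*} [CommMonoid M] (h : ¬r x y) (f : Finset α → M) :
    (∏ B ∈ blocks (join r x y), f B) * (f (block r x) * f (block r y)) =
      (∏ B ∈ blocks r, f B) * f (block (join r x y) x) := by
  have notMem : block r x ∪ block r y ∉ ((blocks r).erase (block r x)).erase (block r y) :=
    fun hmem => block_union_block_notMem_blocks h (mem_of_mem_erase (mem_of_mem_erase hmem))
  rw [blocks_join, prod_insert notMem, ← block_join_left,
    ← mul_prod_erase (blocks r) f (block_mem_blocks (x := x)),
    ← mul_prod_erase _ f (mem_erase.2 ⟨block_ne_block h, block_mem_blocks⟩)]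
  ac_rfl

theorem card_blocks_join (h : ¬r x y) : #(blocks (join r x y)) + 1 = #(blocks r) := by
  have count := sum_blocks_join h fun _ => 1
  simp only [← card_eq_sum_ones] at count
  omega

end JoinCut

section Weight

open Finset

variable {α : Type*} [Fintype α] [DecidableEq α] {r t : Setoid α} {x y : α} {B : Finset α}

/-- If `s` is the partition into cycles of a permutation `σ`, the number of minimal factorizations
of `σ` into transpositions whose orbits are the classes of `r`, divided by the factorial of the
number of factors. -/
noncomputable def hurwitzWeight (r s : Setoid α) : ℚ :=
  (∏ B ∈ blocks r, (#B : ℚ) ^ ((#(blocksIn s B) : ℤ) - 3)) * ∏ C ∈ blocks s, cycleWeight #C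

theorem card_blocksIn_join (h : ¬t x y) (B : Finset α) :
    #(blocksIn (join t x y) B) +
        ((if block t x ⊆ B then 1 else 0) + if block t y ⊆ B then 1 else 0) =
      #(blocksIn t B) + if block (join t x y) x ⊆ B then 1 else 0 := by
  simpa only [blocksIn, card_filter] using sum_blocks_join h fun C => if C ⊆ B then 1 else 0

theorem card_blocksIn_join_self (h : ¬t x y) (hle : join t x y ≤ r) :
    #(blocksIn (join t x y) (block r x)) + 1 = #(blocksIn t (block r x)) := by
  have hy : y ∈ block r x := mem_block.2 (hle join_rel)
  have count := card_blocksIn_join h (block r x)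
  rw [if_pos (block_subset_block (le_join.trans hle) x), if_pos (block_subset_block hle x),
    if_pos ((block_subset_iff (le_join.trans hle) block_mem_blocks).2 hy)] at count
  omega

theorem card_blocksIn_join_of_ne (h : ¬t x y) (hle : join t x y ≤ r) (hB : B ∈ blocks r)
    (hne : B ≠ block r x) : #(blocksIn (join t x y) B) = #(blocksIn t B) := by
  have hx : x ∉ B := fun hx => hne (block_eq_of_mem hB hx).symm
  have hy : y ∉ B := fun hy => hne <| (block_eq_of_mem hB hy).symm.trans
    (block_eq_block.2 (r.symm (hle join_rel)))
  have count := card_blocksIn_join h B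
  simpa [block_subset_iff (le_join.trans hle) hB, block_subset_iff hle hB, hx, hy] using count

theorem hurwitzWeight_join (h : ¬t x y) (hle : join t x y ≤ r) :
    hurwitzWeight r (join t x y) *
        (cycleWeight #(block t x) * cycleWeight #(block t y) * #(block r x)) =
      hurwitzWeight r t * cycleWeight #(block (join t x y) x) := by
  have hB : (#(block r x) : ℚ) ≠ 0 := Nat.cast_ne_zero.2 (blocks_card_pos block_mem_blocks).ne'
  have prod_block : (∏ B ∈ blocks r, (#B : ℚ) ^ ((#(blocksIn (join t x y) B) : ℤ) - 3)) *
      #(block r x) = ∏ B ∈ blocks r, (#B : ℚ) ^ ((#(blocksIn t B) : ℤ) - 3) := by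
    rw [← mul_prod_erase _ _ (block_mem_blocks (x := x)), ← mul_prod_erase (blocks r)
      (fun B => (#B : ℚ) ^ ((#(blocksIn t B) : ℤ) - 3)) (block_mem_blocks (x := x)),
      mul_right_comm, ← card_blocksIn_join_self h hle, ← zpow_add_one₀ hB]
    congr 1
    · congr 1
      push_cast
      ring
    · refine prod_congr rfl fun B hB => ?_
      rw [card_blocksIn_join_of_ne h hle (mem_of_mem_erase hB) (ne_of_mem_erase hB)]
  have prod_cycle := prod_blocks_join h fun C => cycleWeight #C
  rw [hurwitzWeight, hurwitzWeight, ← prod_block]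
  linear_combination (∏ B ∈ blocks r, (#B : ℚ) ^ ((#(blocksIn (join t x y) B) : ℤ) - 3)) *
    #(block r x) * prod_cycle

theorem hurwitzWeight_join_left (h : ¬r x y) (t : Setoid α) :
    hurwitzWeight (join r x y) t *
        ((#(block r x) : ℚ) ^ ((#(blocksIn t (block r x)) : ℤ) - 3) *
          (#(block r y) : ℚ) ^ ((#(blocksIn t (block r y)) : ℤ) - 3)) =
      hurwitzWeight r t * (#(block (join r x y) x) : ℚ) ^
        ((#(blocksIn t (block (join r x y) x)) : ℤ) - 3) := by
  rw [hurwitzWeight, mul_right_comm,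
    prod_blocks_join h fun B => (#B : ℚ) ^ ((#(blocksIn t B) : ℤ) - 3), hurwitzWeight,
    mul_right_comm]

end Weight

section Splittings

open Finset

variable {α : Type*}

noncomputable instance [Finite α] : Fintype (Setoid α) :=
  have := Fintype.ofFinite (α → α → Prop)
  Fintype.ofInjective (fun r : Setoid α => (r : α → α → Prop)) fun _ _ h =>
    Setoid.ext fun a b => iff_of_eq (congrFun₂ h a b)

variable [Fintype α] {r r' t : Setoid α} {x y : α} {B : Finset α} {J : Finset (Finset α)}

open Classical in
/-- The equivalence relations coarser than `t` that are obtained from `r` by splitting the class of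
`x` and `y` into two classes which separate `x` from `y`. -/
noncomputable def splittings (r t : Setoid α) (x y : α) : Finset (Setoid α) :=
  {r' | join r' x y = r ∧ ¬r' x y ∧ t ≤ r'}

theorem mem_splittings : r' ∈ splittings r t x y ↔ join r' x y = r ∧ ¬r' x y ∧ t ≤ r' := by
  simp [splittings]

variable [DecidableEq α]

/-- The union of those blocks of `t` that belong to `J`. -/
noncomputable def blockUnion (t : Setoid α) (J : Finset (Finset α)) : Finset α :=
  {a | block t a ∈ J}

theorem mem_blockUnion {a : α} : a ∈ blockUnion t J ↔ block t a ∈ J := by simp [blockUnion]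

theorem blocksIn_blockUnion (hJ : J ⊆ blocks t) : blocksIn t (blockUnion t J) = J := by
  ext C
  rw [mem_blocksIn]
  constructor
  · rintro ⟨hC, hCJ⟩
    obtain ⟨a, ha, rfl⟩ := exists_block_eq hC
    exact mem_blockUnion.1 (hCJ ha)
  · exact fun hC => ⟨hJ hC, fun a ha => mem_blockUnion.2 ((block_eq_of_mem (hJ hC) ha).symm ▸ hC)⟩

theorem blockUnion_blocksIn (htr : t ≤ r) (hB : B ∈ blocks r) :
    blockUnion t (blocksIn t B) = B := by
  ext a
  rw [mem_blockUnion, mem_blocksIn, block_subset_iff htr hB]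
  exact and_iff_right block_mem_blocks

theorem blockUnion_subset (hJ : J ⊆ blocksIn t B) : blockUnion t J ⊆ B :=
  fun _ ha => (mem_blocksIn.1 (hJ (mem_blockUnion.1 ha))).2 self_mem_block

theorem cut_blockUnion_mem_splittings (htr : t ≤ r) (hxy : r x y)
    (hJ : J ⊆ blocksIn t (block r x)) (hx : block t x ∈ J) (hy : block t y ∉ J) :
    cut r (blockUnion t J) ∈ splittings r t x y := by
  refine mem_splittings.2 ⟨join_cut (blockUnion_subset hJ) (mem_blockUnion.2 hx)
    (mem_blockUnion.not.2 hy) hxy, fun h => ?_, le_cut_iff.2 ⟨htr, fun a b hab => ?_⟩⟩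
  · exact hy (mem_blockUnion.1 ((cut_apply.1 h).2.1 (mem_blockUnion.2 hx)))
  · rw [mem_blockUnion, mem_blockUnion, block_eq_block.2 hab]

theorem cut_block_of_mem_splittings (h : r' ∈ splittings r t x y) : cut r (block r' x) = r' := by
  obtain ⟨rfl, -, -⟩ := mem_splittings.1 h
  exact cut_join

theorem blocksIn_erase_right_of_mem_splittings (h : r' ∈ splittings r t x y) :
    (blocksIn t (block r' y)).erase (block t y) =
      (((blocksIn t (block r x)).erase (block t x)).erase (block t y)) \
        (blocksIn t (block r' x)).erase (block t x) := by
  obtain ⟨rfl, hxy, hle⟩ := mem_splittings.1 h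
  ext C
  simp only [mem_erase, mem_sdiff, mem_blocksIn]
  by_cases hC : C ∈ blocks t
  · obtain ⟨a, -, rfl⟩ := exists_block_eq hC
    have not_both : r' y a → ¬r' x a := fun hya hxa => hxy (r'.trans hxa (r'.symm hya))
    have ne_left : r' y a → block t a ≠ block t x := fun hya e =>
      not_both hya (r'.symm (hle (block_eq_block.1 e)))
    rw [block_subset_iff hle block_mem_blocks, block_subset_iff hle block_mem_blocks,
      block_subset_iff (hle.trans le_join) block_mem_blocks, block_join_left, mem_union,
      mem_block, mem_block]
    tauto
  · tauto

theorem sum_splittings {M : Type*} [AddCommMonoid M] (htr : t ≤ r) (hxy : r x y) (htxy : ¬t x y)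
    (f : Finset (Finset α) → M) :
    ∑ r' ∈ splittings r t x y, f ((blocksIn t (block r' x)).erase (block t x)) =
      ∑ I ∈ (((blocksIn t (block r x)).erase (block t x)).erase (block t y)).powerset, f I := by
  have hCx : block t x ∈ blocksIn t (block r x) := block_mem_blocksIn htr block_mem_blocks
    self_mem_block
  have insert_subset_blocksIn {I : Finset (Finset α)}
      (hI : I ⊆ ((blocksIn t (block r x)).erase (block t x)).erase (block t y)) :
      insert (block t x) I ⊆ blocksIn t (block r x) :=
    insert_subset hCx ((hI.trans (erase_subset _ _)).trans (erase_subset _ _))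
  refine sum_nbij' (fun r' => (blocksIn t (block r' x)).erase (block t x))
    (fun I => cut r (blockUnion t (insert (block t x) I))) ?_ ?_ ?_ ?_ fun _ _ => rfl
  · intro r' hr'
    obtain ⟨rfl, hr'xy, -⟩ := mem_splittings.1 hr'
    refine mem_powerset.2 fun C hC => ?_
    obtain ⟨hne, hC⟩ := mem_erase.1 hC
    obtain ⟨hC, hCx'⟩ := mem_blocksIn.1 hC
    refine mem_erase.2 ⟨?_, mem_erase.2
      ⟨hne, mem_blocksIn.2 ⟨hC, hCx'.trans (block_subset_block le_join x)⟩⟩⟩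
    rintro rfl
    exact hr'xy (mem_block.1 (hCx' self_mem_block))
  · intro I hI
    rw [mem_powerset] at hI
    refine cut_blockUnion_mem_splittings htr hxy (insert_subset_blocksIn hI)
      (mem_insert_self _ _) ?_
    rw [mem_insert, not_or]
    exact ⟨block_ne_block htxy, fun h => notMem_erase _ _ (hI h)⟩
  · intro r' hr'
    have hle := (mem_splittings.1 hr').2.2
    rw [insert_erase (block_mem_blocksIn hle block_mem_blocks self_mem_block),
      blockUnion_blocksIn hle block_mem_blocks, cut_block_of_mem_splittings hr']
  · intro I hI
    rw [mem_powerset] at hI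
    rw [block_cut (blockUnion_subset (insert_subset_blocksIn hI))
        (mem_blockUnion.2 (mem_insert_self _ _)),
      blocksIn_blockUnion ((insert_subset_blocksIn hI).trans (filter_subset _ _)), erase_insert]
    exact fun h => notMem_erase _ _ (mem_of_mem_erase (hI h))

theorem card_block_eq_add_sum (htr : t ≤ r) (x : α) :
    #(block r x) = #(block t x) + ∑ C ∈ (blocksIn t (block r x)).erase (block t x), #C := by
  rw [add_sum_erase _ card (block_mem_blocksIn htr block_mem_blocks self_mem_block),
    sum_card_blocksIn htr block_mem_blocks]

theorem card_blocksIn_block_eq (htr : t ≤ r) (x : α) :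
    #(blocksIn t (block r x)) = #((blocksIn t (block r x)).erase (block t x)) + 1 :=
  (card_erase_add_one (block_mem_blocksIn htr block_mem_blocks self_mem_block)).symm

theorem blockPow_eq (htr : t ≤ r) (x : α) :
    (#(block r x) : ℚ) ^ ((#(blocksIn t (block r x)) : ℤ) - 3) =
      (#(block t x) + ∑ C ∈ (blocksIn t (block r x)).erase (block t x), (#C : ℚ)) ^
        ((#((blocksIn t (block r x)).erase (block t x)) : ℤ) - 2) := by
  rw [card_block_eq_add_sum htr x, card_blocksIn_block_eq htr x]
  push_cast
  congr 1
  ring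

theorem sum_hurwitzWeight_splittings_mul (htr : t ≤ r) (hxy : r x y) (htxy : ¬t x y) :
    (∑ r' ∈ splittings r t x y, hurwitzWeight r' t) *
        (#(block r x) : ℚ) ^ ((#(blocksIn t (block r x)) : ℤ) - 3) =
      hurwitzWeight r t * splitSum (fun C : Finset α => (#C : ℚ))
        (((blocksIn t (block r x)).erase (block t x)).erase (block t y))
        #(block t x) #(block t y) := by
  rw [splitSum, ← sum_splittings htr hxy htxy, sum_mul, mul_sum]
  refine sum_congr rfl fun r' hr' => ?_
  rw [← blocksIn_erase_right_of_mem_splittings hr']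
  obtain ⟨rfl, hr'xy, hle⟩ := mem_splittings.1 hr'
  rw [← hurwitzWeight_join_left hr'xy, blockPow_eq hle x, blockPow_eq hle y]

theorem blocksIn_join_erase (h : ¬t x y) (B : Finset α) :
    (blocksIn (join t x y) B).erase (block (join t x y) x) =
      ((blocksIn t B).erase (block t x)).erase (block t y) := by
  have notMem : block t x ∪ block t y ∉ ((blocks t).erase (block t x)).erase (block t y) :=
    fun hmem => block_union_block_notMem_blocks h (mem_of_mem_erase (mem_of_mem_erase hmem))
  simp only [blocksIn, ← filter_erase]
  rw [block_join_left, blocks_join, erase_insert notMem]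

theorem sum_hurwitzWeight_splittings (h : ¬t x y) (hle : join t x y ≤ r) :
    ∑ r' ∈ splittings r t x y, hurwitzWeight r' t =
      hurwitzWeight r (join t x y) *
        (cycleWeight #(block t x) * cycleWeight #(block t y) /
          cycleWeight #(block (join t x y) x) *
        splitSum (fun C : Finset α => (#C : ℚ))
          ((blocksIn (join t x y) (block r x)).erase (block (join t x y) x))
          #(block t x) #(block t y) /
        (#(block r x) : ℚ) ^ ((#(blocksIn (join t x y) (block r x)) : ℤ) - 3)) := by
  obtain ⟨htr, hxy⟩ := join_le_iff.1 hle
  have hB : (#(block r x) : ℚ) ≠ 0 := Nat.cast_ne_zero.2 (blocks_card_pos block_mem_blocks).ne'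
  have hφ : cycleWeight #(block (join t x y) x) ≠ 0 :=
    (cycleWeight_pos (blocks_card_pos block_mem_blocks)).ne'
  have hpow := zpow_ne_zero ((#(blocksIn (join t x y) (block r x)) : ℤ) - 3) hB
  have hW := hurwitzWeight_join h hle
  have hsum := sum_hurwitzWeight_splittings_mul htr hxy h
  rw [← blocksIn_join_erase h, ← card_blocksIn_join_self h hle, Nat.cast_succ, add_sub_right_comm,
    zpow_add_one₀ hB] at hsum
  field_simp
  refine mul_right_cancel₀ hB ?_
  linear_combination cycleWeight #(block (join t x y) x) * hsum -
    splitSum (fun C : Finset α => (#C : ℚ))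
      ((blocksIn (join t x y) (block r x)).erase (block (join t x y) x))
      #(block t x) #(block t y) * hW

end Splittings

section Cycles

open Finset Function

variable {α : Type*}

/-- The equivalence relation whose classes are the supports of the cycles of `σ`, including the
fixed points of `σ`. -/
abbrev cycles (σ : Perm α) : Setoid α := Perm.SameCycle.setoid σ

theorem rel_swap_apply [DecidableEq α] {t : Setoid α} {x y : α} (h : t x y) (c : α) :
    t c (swap x y c) := by
  rw [swap_apply_def]
  split_ifs with hx hy
  · exact hx ▸ h
  · exact hy ▸ t.symm h
  · exact t.refl c

theorem iterate_ne_of_lt_minimalPeriod {f : α → α} {x : α} {i : ℕ} (hi : i ≠ 0)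
    (h : i < minimalPeriod f x) : f^[i] x ≠ x :=
  not_isPeriodicPt_of_pos_of_lt_minimalPeriod hi h

theorem iterate_ne_of_lt_lt_minimalPeriod {f : α → α} {x : α} {k : ℕ} (hk : k < minimalPeriod f x) :
    ∀ i < k, i ≠ 0 → f^[i] x ≠ x ∧ f^[i] x ≠ f^[k] x := fun _ hi h0 =>
  ⟨iterate_ne_of_lt_minimalPeriod h0 (hi.trans hk),
    fun e => hi.ne (iterate_injOn_Iio_minimalPeriod (hi.trans hk) hk e)⟩

section

variable [Finite α] {σ : Perm α} {t : Setoid α} {x y : α}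

theorem cycles_apply : cycles σ x y ↔ ∃ i : ℕ, σ^[i] x = y := by
  refine ⟨fun h => ?_, fun ⟨i, hi⟩ => ⟨i, by rw [zpow_natCast, ← Perm.iterate_eq_pow, hi]⟩⟩
  obtain ⟨i, -, hi⟩ := Perm.SameCycle.exists_pow_eq' h
  exact ⟨i, by rw [Perm.iterate_eq_pow, hi]⟩

theorem exists_iterate_lt_minimalPeriod (h : cycles σ x y) :
    ∃ i < minimalPeriod σ x, σ^[i] x = y := by
  obtain ⟨i, rfl⟩ := cycles_apply.1 h
  exact ⟨i % minimalPeriod σ x, Nat.mod_lt _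
    (minimalPeriod_pos_of_mem_periodicPts (σ.injective.mem_periodicPts x)),
    iterate_mod_minimalPeriod_eq⟩

theorem cycles_le_iff : cycles σ ≤ t ↔ ∀ a, t a (σ a) := by
  refine ⟨fun h a => h (cycles_apply.2 ⟨1, rfl⟩), fun h a b hab => ?_⟩
  obtain ⟨i, rfl⟩ := cycles_apply.1 hab
  clear hab
  induction i with
  | zero => exact t.refl a
  | succ i ih =>
    rw [iterate_succ_apply']
    exact t.trans ih (h _)

variable [DecidableEq α]

theorem cycles_swap_mul_le (σ : Perm α) (x y : α) : cycles (swap x y * σ) ≤ join (cycles σ) x y :=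
  cycles_le_iff.2 fun a => (join (cycles σ) x y).trans
    (le_join (cycles_le_iff.1 le_rfl a)) (rel_swap_apply join_rel (σ a))

theorem le_cycles_swap_mul (σ : Perm α) (x y : α) :
    cycles σ ≤ join (cycles (swap x y * σ)) x y := by
  simpa only [← mul_assoc, swap_mul_self, one_mul] using cycles_swap_mul_le (swap x y * σ) x y

end

variable [DecidableEq α] {σ : Perm α} {x y : α}

theorem iterate_swap_mul {k i : ℕ} (h : ∀ i < k, i ≠ 0 → σ^[i] x ≠ x ∧ σ^[i] x ≠ y) (hi : i < k) :
    (swap x y * σ)^[i] x = σ^[i] x := by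
  induction i with
  | zero => rfl
  | succ i ih =>
    obtain ⟨hx, hy⟩ := h (i + 1) hi (Nat.succ_ne_zero i)
    rw [iterate_succ_apply', ih (Nat.lt_of_succ_lt hi), Perm.mul_apply, ← iterate_succ_apply' σ,
      swap_apply_of_ne_of_ne hx hy]

theorem iterate_swap_mul_self {k : ℕ} (hk : k ≠ 0)
    (h : ∀ i < k, i ≠ 0 → σ^[i] x ≠ x ∧ σ^[i] x ≠ y) :
    (swap x y * σ)^[k] x = swap x y (σ^[k] x) := by
  obtain ⟨i, rfl⟩ := Nat.exists_eq_succ_of_ne_zero hk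
  rw [iterate_succ_apply', iterate_swap_mul h i.lt_succ_self, Perm.mul_apply,
    ← iterate_succ_apply' σ]

theorem cycles_swap_mul_of_not_rel [Finite α] (h : ¬cycles σ x y) :
    cycles (swap x y * σ) = join (cycles σ) x y := by
  have avoid : ∀ i < minimalPeriod σ x, i ≠ 0 → σ^[i] x ≠ x ∧ σ^[i] x ≠ y := fun i hi h0 =>
    ⟨iterate_ne_of_lt_minimalPeriod h0 hi, fun hy => h (cycles_apply.2 ⟨i, hy⟩)⟩
  have hperiod : minimalPeriod σ x ≠ 0 :=
    (minimalPeriod_pos_of_mem_periodicPts (σ.injective.mem_periodicPts x)).ne'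
  have hxy : cycles (swap x y * σ) x y := cycles_apply.2 ⟨minimalPeriod σ x, by
    rw [iterate_swap_mul_self hperiod avoid, iterate_minimalPeriod, swap_apply_left]⟩
  exact le_antisymm (cycles_swap_mul_le σ x y)
    (join_le_iff.2 ⟨join_eq_self hxy ▸ le_cycles_swap_mul σ x y, hxy⟩)

theorem rel_of_cycles_swap_mul_le [Finite α] {t : Setoid α} (h : ¬cycles σ x y)
    (hle : cycles (swap x y * σ) ≤ t) : t x y :=
  hle (cycles_swap_mul_of_not_rel h ▸ join_rel)

theorem join_cycles_swap_mul [Finite α] (h : cycles σ x y) :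
    join (cycles (swap x y * σ)) x y = cycles σ :=
  le_antisymm (join_le_iff.2 ⟨join_eq_self h ▸ cycles_swap_mul_le σ x y, h⟩)
    (le_cycles_swap_mul σ x y)

theorem minimalPeriod_swap_mul {k : ℕ} (h0 : k ≠ 0) (hk : k < minimalPeriod σ x) :
    minimalPeriod (swap x (σ^[k] x) * σ) x = k := by
  have avoid := iterate_ne_of_lt_lt_minimalPeriod hk
  have hper : IsPeriodicPt (swap x (σ^[k] x) * σ) k x := by
    rw [IsPeriodicPt, IsFixedPt, iterate_swap_mul_self h0 avoid, swap_apply_right]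
  refine le_antisymm (hper.minimalPeriod_le (Nat.pos_of_ne_zero h0)) (le_of_not_gt fun hlt => ?_)
  have hpos := hper.minimalPeriod_pos (Nat.pos_of_ne_zero h0)
  refine (avoid _ hlt hpos.ne').1 ?_
  rw [← iterate_swap_mul avoid hlt, iterate_minimalPeriod]

theorem not_cycles_swap_mul [Finite α] (hxy : x ≠ y) (h : cycles σ x y) :
    ¬cycles (swap x y * σ) x y := by
  obtain ⟨k, hk, rfl⟩ := exists_iterate_lt_minimalPeriod h
  have h0 : k ≠ 0 := fun h0 => hxy (by rw [h0, iterate_zero_apply])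
  intro hcut
  obtain ⟨i, hi, e⟩ := exists_iterate_lt_minimalPeriod hcut
  rw [minimalPeriod_swap_mul h0 hk] at hi
  rw [iterate_swap_mul (iterate_ne_of_lt_lt_minimalPeriod hk) hi] at e
  exact hi.ne (iterate_injOn_Iio_minimalPeriod (hi.trans hk) hk e)

variable [Fintype α]

theorem block_cycles : block (cycles σ) x = (range (minimalPeriod σ x)).image fun i => σ^[i] x := by
  ext y
  rw [mem_block, mem_image]
  refine ⟨fun h => ?_, fun ⟨i, _, hi⟩ => cycles_apply.2 ⟨i, hi⟩⟩
  obtain ⟨i, hi, e⟩ := exists_iterate_lt_minimalPeriod h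
  exact ⟨i, mem_range.2 hi, e⟩

theorem card_block_cycles : #(block (cycles σ) x) = minimalPeriod σ x := by
  rw [block_cycles, card_image_of_injOn, card_range]
  exact iterate_injOn_Iio_minimalPeriod.mono fun i hi => mem_range.1 hi

theorem card_block_cycles_swap_mul {k : ℕ} (h0 : k ≠ 0) (hk : k < minimalPeriod σ x) :
    #(block (cycles (swap x (σ^[k] x) * σ)) x) = k := by
  rw [card_block_cycles, minimalPeriod_swap_mul h0 hk]

theorem sum_block_cycles_erase {M : Type*} [AddCommMonoid M] (f : α → M) :
    ∑ y ∈ (block (cycles σ) x).erase x, f y =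
      ∑ k ∈ Ico 1 #(block (cycles σ) x), f (σ^[k] x) := by
  have injOn : Set.InjOn (fun k => σ^[k] x) (Ico 1 (minimalPeriod σ x)) :=
    iterate_injOn_Iio_minimalPeriod.mono fun k hk => (mem_Ico.1 hk).2
  have hpos := minimalPeriod_pos_of_mem_periodicPts (σ.injective.mem_periodicPts x)
  rw [card_block_cycles, block_cycles, range_eq_Ico, ← insert_Ico_add_one_left_eq_Ico hpos,
    image_insert, iterate_zero_apply, erase_insert, zero_add, sum_image injOn]
  rw [mem_image]
  rintro ⟨k, hk, e⟩
  obtain ⟨h1, hkp⟩ := mem_Ico.1 hk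
  exact iterate_ne_of_lt_minimalPeriod (Nat.pos_iff_ne_zero.1 h1) hkp e

end Cycles

section Recursion

open Finset Function

variable {α : Type*} [Fintype α] [DecidableEq α] {r : Setoid α} {σ : Perm α}

open Classical in
/-- The share of the transposition `swap x y` in the cut-and-join recursion for
`hurwitzWeight r (cycles σ)`: multiplication by it either cuts a cycle of `σ` and splits an orbit,
or joins two cycles within an orbit. -/
noncomputable def stepWeight (r : Setoid α) (σ : Perm α) (x y : α) : ℚ :=
  if cycles σ x y then
    ∑ r' ∈ splittings r (cycles (swap x y * σ)) x y, hurwitzWeight r' (cycles (swap x y * σ))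
  else if r x y then hurwitzWeight r (cycles (swap x y * σ)) else 0

theorem sum_block_erase_stepWeight (h : cycles σ ≤ r) (x : α) :
    ∑ y ∈ (block (cycles σ) x).erase x, stepWeight r σ x y =
      hurwitzWeight r (cycles σ) * ∑ a ∈ Ico 1 #(block (cycles σ) x),
        cycleWeight a * cycleWeight (#(block (cycles σ) x) - a) /
          cycleWeight #(block (cycles σ) x) *
        splitSum (fun C : Finset α => (#C : ℚ))
          ((blocksIn (cycles σ) (block r x)).erase (block (cycles σ) x))
          a (#(block (cycles σ) x) - a : ℕ) /
        (#(block r x) : ℚ) ^ ((#(blocksIn (cycles σ) (block r x)) : ℤ) - 3) := by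
  rw [sum_block_cycles_erase, mul_sum]
  refine sum_congr rfl fun a ha => ?_
  obtain ⟨ha0, ha⟩ := mem_Ico.1 ha
  rw [Nat.one_le_iff_ne_zero] at ha0
  rw [card_block_cycles] at ha
  have hxy : cycles σ x (σ^[a] x) := cycles_apply.2 ⟨a, rfl⟩
  have separated := not_cycles_swap_mul (iterate_ne_of_lt_minimalPeriod ha0 ha).symm hxy
  have card_right := card_block_join separated
  have weight := sum_hurwitzWeight_splittings separated ((join_cycles_swap_mul hxy).trans_le h)
  rw [join_cycles_swap_mul hxy, card_block_cycles_swap_mul ha0 ha] at weight card_right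
  rw [stepWeight, if_pos hxy, weight, card_right, Nat.add_sub_cancel_left]

theorem sum_compl_block_stepWeight (h : cycles σ ≤ r) (x : α) :
    ∑ y ∈ (block (cycles σ) x)ᶜ, stepWeight r σ x y =
      hurwitzWeight r (cycles σ) *
        ∑ D ∈ (blocksIn (cycles σ) (block r x)).erase (block (cycles σ) x),
          #D * (cycleWeight (#(block (cycles σ) x) + #D) /
            (cycleWeight #(block (cycles σ) x) * cycleWeight #D)) / #(block r x) := by
  have hB : block r x ∈ blocks r := block_mem_blocks
  have hC : block (cycles σ) x ∈ blocksIn (cycles σ) (block r x) :=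
    block_mem_blocksIn h hB self_mem_block
  have outside : ∀ y ∈ (block (cycles σ) x)ᶜ, y ∉ block r x \ block (cycles σ) x →
      stepWeight r σ x y = 0 := fun y hy hy' => by
    rw [mem_compl] at hy
    have hry : ¬r x y := fun hr => hy' (mem_sdiff.2 ⟨mem_block.2 hr, hy⟩)
    rw [stepWeight, if_neg (mt mem_block.2 hy), if_neg hry]
  rw [← sum_subset (fun y hy => mem_compl.2 (mem_sdiff.1 hy).2) outside,
    sum_sdiff_eq_sum_blocksIn_erase h hB hC, mul_sum]
  refine sum_congr rfl fun D hD => ?_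
  obtain ⟨hne, hD⟩ := mem_erase.1 hD
  obtain ⟨hD, hDB⟩ := mem_blocksIn.1 hD
  have inside : ∀ y ∈ D, stepWeight r σ x y = hurwitzWeight r (cycles σ) *
      (cycleWeight (#(block (cycles σ) x) + #D) /
        (cycleWeight #(block (cycles σ) x) * cycleWeight #D)) / #(block r x) := fun y hy => by
    obtain rfl := block_eq_of_mem hD hy
    have hxy : ¬cycles σ x y := fun hxy => hne (block_eq_block.2 hxy).symm
    have hrxy : r x y := mem_block.1 (hDB hy)
    rw [stepWeight, if_neg hxy, if_pos hrxy, cycles_swap_mul_of_not_rel hxy, ← card_block_join hxy,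
      mul_div_assoc, div_div, ← mul_div_assoc, ← hurwitzWeight_join hxy (join_le_iff.2 ⟨h, hrxy⟩),
      mul_div_cancel_right₀]
    exact mul_ne_zero (mul_ne_zero (cycleWeight_pos (blocks_card_pos block_mem_blocks)).ne'
      (cycleWeight_pos (blocks_card_pos block_mem_blocks)).ne')
      (Nat.cast_ne_zero.2 (blocks_card_pos block_mem_blocks).ne')
  rw [sum_congr rfl inside, sum_const, nsmul_eq_mul]
  ring

theorem sum_erase_stepWeight (x : α) :
    ∑ y ∈ univ.erase x, stepWeight r σ x y =
      ∑ y ∈ (block (cycles σ) x)ᶜ, stepWeight r σ x y +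
        ∑ y ∈ (block (cycles σ) x).erase x, stepWeight r σ x y := by
  rw [← sum_sdiff (erase_subset_erase x (subset_univ (block (cycles σ) x)))]
  congr 2
  ext y
  simp only [mem_sdiff, mem_erase, mem_univ, and_true, mem_compl]
  exact ⟨fun h hy => h.2 ⟨h.1, hy⟩, fun h => ⟨fun e => h (e ▸ self_mem_block), fun h' => h h'.2⟩⟩

theorem sum_mem_blocks_stepWeight (h : cycles σ ≤ r) {B : Finset α} (hB : B ∈ blocks r) :
    ∑ x ∈ B, ∑ y ∈ univ.erase x, stepWeight r σ x y =
      hurwitzWeight r (cycles σ) * (2 * (#B + #(blocksIn (cycles σ) B) - 2)) := by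
  obtain ⟨b, hb, -⟩ := exists_block_eq hB
  rw [← sum_join_add_sum_cut (fun C : Finset α => #C) (fun C hC => blocksIn_card_pos hC)
      ⟨_, block_mem_blocksIn h hB hb⟩ (by exact_mod_cast (sum_card_blocksIn h hB).symm),
    ← sum_add_distrib, mul_sum, sum_mem_eq_sum_blocksIn h hB]
  refine sum_congr rfl fun C hC => ?_
  have same : ∀ x ∈ C, block (cycles σ) x = C ∧ block r x = B := fun x hx =>
    ⟨block_eq_of_mem (mem_blocksIn.1 hC).1 hx, block_eq_of_mem hB ((mem_blocksIn.1 hC).2 hx)⟩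
  rw [sum_congr rfl fun x hx => by
    rw [sum_erase_stepWeight, sum_compl_block_stepWeight h, sum_block_erase_stepWeight h,
      (same x hx).1, (same x hx).2, ← mul_add], sum_const, nsmul_eq_mul, mul_left_comm, mul_add,
    mul_sum]
  simp only [mul_assoc, mul_div_assoc]

theorem sum_stepWeight (h : cycles σ ≤ r) :
    ∑ x, ∑ y ∈ univ.erase x, stepWeight r σ x y =
      2 * (Fintype.card α + #(blocks (cycles σ)) - 2 * #(blocks r)) *
        hurwitzWeight r (cycles σ) := by
  rw [sum_eq_sum_blocks r, sum_congr rfl fun B hB => sum_mem_blocks_stepWeight h hB]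
  simp only [← mul_sum, sum_sub_distrib, sum_add_distrib, ← Nat.cast_sum, sum_card_blocks,
    sum_card_blocksIn_blocks h, sum_const, nsmul_eq_mul]
  ring

end Recursion

section Factorizations

open Finset

/-- The equivalence relation whose classes are the orbits of the group generated by `S`. -/
abbrev orbits {α : Type*} (S : Set (Perm α)) : Setoid α :=
  MulAction.orbitRel (Subgroup.closure S) α

section Orbits

variable {α : Type*} {S : Set (Perm α)} {t : Setoid α}

theorem orbits_apply {a b : α} : orbits S a b ↔ ∃ g ∈ Subgroup.closure S, g b = a := by
  rw [MulAction.orbitRel_apply, MulAction.mem_orbit_iff]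
  exact ⟨fun ⟨g, hg⟩ => ⟨g, g.2, hg⟩, fun ⟨g, hS, hg⟩ => ⟨⟨g, hS⟩, hg⟩⟩

theorem orbits_apply_of_mem_closure {g : Perm α} (hg : g ∈ Subgroup.closure S) (a : α) :
    orbits S a (g a) :=
  (orbits S).symm (orbits_apply.2 ⟨g, hg, rfl⟩)

theorem orbits_le_iff : orbits S ≤ t ↔ ∀ g ∈ S, ∀ a, t a (g a) := by
  refine ⟨fun h g hg a => h (orbits_apply_of_mem_closure (Subgroup.subset_closure hg) a),
    fun h a b hab => ?_⟩
  obtain ⟨g, hg, rfl⟩ := orbits_apply.1 hab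
  refine t.symm ?_
  clear hab
  induction hg using Subgroup.closure_induction generalizing b with
  | mem g hg => exact h g hg b
  | one => exact t.refl b
  | mul g k _ _ ihg ihk => exact t.trans (ihk b) (ihg (k b))
  | inv g _ ih => simpa using t.symm (ih (g⁻¹ b))

theorem orbits_empty : orbits (∅ : Set (Perm α)) = ⊥ :=
  eq_bot_iff.2 (orbits_le_iff.2 fun _ hg => hg.elim)

theorem orbits_insert_swap [DecidableEq α] (S : Set (Perm α)) (x y : α) :
    orbits (insert (swap x y) S) = join (orbits S) x y := by
  refine le_antisymm (orbits_le_iff.2 ?_) (join_le_iff.2 ⟨orbits_le_iff.2 fun g hg => ?_, ?_⟩)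
  · rintro _ (rfl | hg) a
    · exact rel_swap_apply join_rel a
    · exact le_join (orbits_apply_of_mem_closure (Subgroup.subset_closure hg) a)
  · exact orbits_apply_of_mem_closure (Subgroup.subset_closure (Set.mem_insert_of_mem _ hg))
  · simpa only [swap_apply_left] using
      orbits_apply_of_mem_closure (Subgroup.subset_closure (Set.mem_insert (swap x y) S)) x

theorem cycles_le_orbits [Finite α] {σ : Perm α} (h : σ ∈ Subgroup.closure S) :
    cycles σ ≤ orbits S :=
  cycles_le_iff.2 (orbits_apply_of_mem_closure h)

end Orbits

theorem prod_ofFn_mem_closure {G : Type*} [Group G] {m : ℕ} (t : Fin m → G) :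
    (List.ofFn t).prod ∈ Subgroup.closure (Set.range t) :=
  Subgroup.list_prod_mem _ fun _ hg => Subgroup.subset_closure ((List.mem_ofFn' t _).1 hg)

variable {α : Type*}

theorem cycles_one [Finite α] : cycles (1 : Perm α) = ⊥ :=
  eq_bot_iff.2 (cycles_le_iff.2 fun a => (⊥ : Setoid α).refl a)

variable [DecidableEq α]

theorem swap_apply_eq_of_isSwap {τ : Perm α} {x : α} (h : τ.IsSwap) (hx : τ x ≠ x) :
    swap x (τ x) = τ := by
  obtain ⟨a, b, hab, rfl⟩ := h
  obtain ⟨-, rfl | rfl⟩ := Equiv.swap_apply_ne_self_iff.1 hx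
  · rw [swap_apply_left]
  · rw [swap_apply_right, swap_comm]

variable [Fintype α] {r : Setoid α} {σ : Perm α} {x y : α} {m : ℕ}

open Classical in
theorem sum_sum_swap {M : Type*} [AddCommMonoid M] (f : Perm α → M) :
    ∑ x, ∑ y ∈ univ.erase x, f (swap x y) = 2 • ∑ τ : Perm α with τ.IsSwap, f τ := by
  have swaps_moving (x : α) : ∑ y ∈ univ.erase x, f (swap x y) =
      ∑ τ : Perm α with τ.IsSwap, if x ∈ τ.support then f τ else 0 := by
    rw [← sum_filter, filter_filter]
    refine sum_nbij' (swap x) (fun τ => τ x) (fun y hy => ?_) (fun τ hτ => ?_)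
      (fun y _ => swap_apply_left x y) (fun τ hτ => ?_) fun _ _ => rfl
    · have hne := (ne_of_mem_erase hy).symm
      simp only [mem_filter_univ, Perm.mem_support, swap_apply_left]
      exact ⟨⟨x, y, hne, rfl⟩, hne.symm⟩
    · simpa using (mem_filter.1 hτ).2.2
    · obtain ⟨hτ, hx⟩ := (mem_filter.1 hτ).2
      exact swap_apply_eq_of_isSwap hτ (Perm.mem_support.1 hx)
  simp only [swaps_moving]
  rw [sum_comm, smul_sum]
  refine sum_congr rfl fun τ hτ => ?_
  rw [← sum_filter, filter_mem_eq_inter, univ_inter, sum_const,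
    Perm.card_support_eq_two.2 (mem_filter.1 hτ).2]

open Classical in
/-- The factorizations of `σ` into `m` transpositions that generate a group whose orbits are the
classes of `r`. -/
noncomputable def factorizations (m : ℕ) (r : Setoid α) (σ : Perm α) : Finset (Fin m → Perm α) :=
  {t | (∀ i, (t i).IsSwap) ∧ (List.ofFn t).prod = σ ∧ orbits (Set.range t) = r}

theorem mem_factorizations {t : Fin m → Perm α} : t ∈ factorizations m r σ ↔
    (∀ i, (t i).IsSwap) ∧ (List.ofFn t).prod = σ ∧ orbits (Set.range t) = r := by
  simp [factorizations]

theorem cycles_le_of_mem_factorizations {t : Fin m → Perm α} (ht : t ∈ factorizations m r σ) :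
    cycles σ ≤ r := by
  obtain ⟨-, rfl, rfl⟩ := mem_factorizations.1 ht
  exact cycles_le_orbits (prod_ofFn_mem_closure t)

theorem cons_mem_factorizations (hxy : x ≠ y) {t : Fin m → Perm α} :
    (Fin.cons (swap x y) t : Fin (m + 1) → Perm α) ∈ factorizations (m + 1) r σ ↔
      t ∈ factorizations m (orbits (Set.range t)) (swap x y * σ) ∧
        join (orbits (Set.range t)) x y = r := by
  have isSwap : (swap x y).IsSwap := ⟨x, y, hxy, rfl⟩
  have swap_mul_eq (τ : Perm α) : swap x y * τ = σ ↔ τ = swap x y * σ := by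
    rw [← eq_inv_mul_iff_mul_eq, swap_inv]
  simp only [mem_factorizations, Fin.forall_fin_succ, Fin.cons_zero, Fin.cons_succ,
    List.ofFn_succ, List.prod_cons, Fin.range_cons, orbits_insert_swap, swap_mul_eq,
    isSwap, true_and, and_true, and_assoc]

open Classical in
theorem card_filter_factorizations (r : Setoid α) (σ : Perm α) (m : ℕ) (hxy : x ≠ y) :
    #{t ∈ factorizations (m + 1) r σ | t 0 = swap x y} =
      ∑ r' with join r' x y = r, #(factorizations m r' (swap x y * σ)) := by
  rw [← card_sigma]
  symm
  refine card_bij (fun p _ => Fin.cons (swap x y) p.2) ?_ ?_ ?_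
  · rintro ⟨r', t⟩ ht
    obtain ⟨hr', ht : t ∈ factorizations m r' _⟩ := mem_sigma.1 ht
    obtain rfl := (mem_factorizations.1 ht).2.2
    exact mem_filter.2 ⟨(cons_mem_factorizations hxy).2 ⟨ht, (mem_filter.1 hr').2⟩, rfl⟩
  · rintro ⟨r₁, t₁⟩ h₁ ⟨r₂, t₂⟩ h₂ h
    obtain rfl : t₁ = t₂ := Fin.cons_right_injective _ h
    obtain rfl : orbits (Set.range t₁) = r₁ := (mem_factorizations.1 (mem_sigma.1 h₁).2).2.2
    obtain rfl : orbits (Set.range t₁) = r₂ := (mem_factorizations.1 (mem_sigma.1 h₂).2).2.2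
    rfl
  · intro t ht
    obtain ⟨ht, h0⟩ := mem_filter.1 ht
    rw [← Fin.cons_self_tail t, h0, cons_mem_factorizations hxy] at ht
    exact ⟨⟨_, Fin.tail t⟩, mem_sigma.2 ⟨mem_filter.2 ⟨mem_univ _, ht.2⟩, ht.1⟩,
      by rw [← h0]; exact Fin.cons_self_tail t⟩

open Classical in
theorem two_mul_card_factorizations_succ (m : ℕ) (r : Setoid α) (σ : Perm α) :
    2 * #(factorizations (m + 1) r σ) = ∑ x, ∑ y ∈ univ.erase x,
      ∑ r' with join r' x y = r, #(factorizations m r' (swap x y * σ)) := by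
  have first_isSwap : ∀ t ∈ factorizations (m + 1) r σ, t 0 ∈ ({τ | τ.IsSwap} : Finset (Perm α)) :=
    fun t ht => mem_filter_univ _ |>.2 ((mem_factorizations.1 ht).1 0)
  rw [card_eq_sum_card_fiberwise first_isSwap, ← smul_eq_mul, ← sum_sum_swap]
  exact sum_congr rfl fun x _ => sum_congr rfl fun y hy =>
    card_filter_factorizations r σ m (ne_of_mem_erase hy).symm

theorem card_eq_one_of_mem_blocks_bot {B : Finset α} (hB : B ∈ blocks (⊥ : Setoid α)) :
    #B = 1 := by
  obtain ⟨x, -, rfl⟩ := exists_block_eq hB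
  exact card_eq_one.2 ⟨x, by ext y; simp [eq_comm]⟩

theorem card_blocks_bot : #(blocks (⊥ : Setoid α)) = Fintype.card α := by
  rw [← sum_card_blocks (⊥ : Setoid α), sum_congr rfl fun B hB => card_eq_one_of_mem_blocks_bot hB,
    sum_const, smul_eq_mul, mul_one]

theorem eq_bot_of_card_le (h : Fintype.card α ≤ #(blocks r)) : r = ⊥ := by
  refine eq_bot_iff.2 fun x y hxy => ?_
  by_contra hne
  have := card_blocks_join (r := ⊥) (x := x) (y := y) hne
  have := card_blocks_le_of_le (join_le_iff.2 ⟨bot_le, hxy⟩)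
  rw [card_blocks_bot] at *
  omega

theorem card_blocks_cycles_swap_mul (hxy : x ≠ y) (h : cycles σ x y) :
    #(blocks (cycles (swap x y * σ))) = #(blocks (cycles σ)) + 1 := by
  rw [← card_blocks_join (not_cycles_swap_mul hxy h), join_cycles_swap_mul h]

theorem card_blocks_cycles_swap_mul_of_not_rel (h : ¬cycles σ x y) :
    #(blocks (cycles (swap x y * σ))) + 1 = #(blocks (cycles σ)) := by
  rw [cycles_swap_mul_of_not_rel h, card_blocks_join h]

/-- The Riemann–Hurwitz inequality. -/
theorem card_add_card_blocks_cycles_le {t : Fin m → Perm α} (ht : t ∈ factorizations m r σ) :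
    Fintype.card α + #(blocks (cycles σ)) ≤ m + 2 * #(blocks r) := by
  induction m generalizing r σ with
  | zero =>
    obtain ⟨-, rfl, rfl⟩ := mem_factorizations.1 ht
    simp [card_blocks_bot, cycles_one, orbits_empty, two_mul]
  | succ m ih =>
    obtain ⟨x, y, hxy, h0⟩ := (mem_factorizations.1 ht).1 0
    rw [← Fin.cons_self_tail t, h0, cons_mem_factorizations hxy] at ht
    obtain ⟨ht, rfl⟩ := ht
    have := ih ht
    by_cases hc : cycles σ x y
    · have := card_blocks_cycles_swap_mul hxy hc
      by_cases hr : orbits (Set.range (Fin.tail t)) x y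
      · rw [join_eq_self hr]
        omega
      · have := card_blocks_join hr
        omega
    · have := card_blocks_cycles_swap_mul_of_not_rel hc
      rw [join_eq_self (rel_of_cycles_swap_mul_le hc (cycles_le_of_mem_factorizations ht))]
      omega

open Classical in
theorem sum_card_factorizations_of_cycles (hxy : x ≠ y) (h : cycles σ x y)
    (hm : m + 1 + 2 * #(blocks r) = Fintype.card α + #(blocks (cycles σ))) :
    ∑ r' with join r' x y = r, #(factorizations m r' (swap x y * σ)) =
      ∑ r' ∈ splittings r (cycles (swap x y * σ)) x y, #(factorizations m r' (swap x y * σ)) := by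
  symm
  refine sum_subset (fun r' hr' => (mem_filter_univ r').2 (mem_splittings.1 hr').1)
    fun r' hr' hns => card_eq_zero.2 (eq_empty_of_forall_notMem fun t ht => hns ?_)
  obtain rfl := (mem_filter_univ r').1 hr'
  refine mem_splittings.2 ⟨rfl, fun hr' => ?_, cycles_le_of_mem_factorizations ht⟩
  have := card_add_card_blocks_cycles_le ht
  have := card_blocks_cycles_swap_mul hxy h
  rw [join_eq_self hr'] at hm
  omega

open Classical in
theorem sum_card_factorizations_of_not_cycles (r : Setoid α) (m : ℕ) (h : ¬cycles σ x y) :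
    ∑ r' with join r' x y = r, #(factorizations m r' (swap x y * σ)) =
      if r x y then #(factorizations m r (swap x y * σ)) else 0 := by
  have rel_of_mem (r' : Setoid α) (t) (ht : t ∈ factorizations m r' (swap x y * σ)) : r' x y :=
    rel_of_cycles_swap_mul_le h (cycles_le_of_mem_factorizations ht)
  split_ifs with hr
  · refine sum_eq_single_of_mem r ((mem_filter_univ r).2 (join_eq_self hr)) fun r' hr' hne =>
      card_eq_zero.2 (eq_empty_of_forall_notMem fun t ht => hne ?_)
    rw [← (mem_filter_univ r').1 hr', join_eq_self (rel_of_mem r' t ht)]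
  · refine sum_eq_zero fun r' hr' => (hr ?_).elim
    rw [← (mem_filter_univ r').1 hr']
    exact join_rel

theorem hurwitzWeight_bot : hurwitzWeight (⊥ : Setoid α) ⊥ = 1 := by
  rw [hurwitzWeight, prod_eq_one fun B hB => ?_, prod_eq_one fun B hB => ?_, one_mul]
  · rw [card_eq_one_of_mem_blocks_bot hB, cycleWeight_one]
  · rw [card_eq_one_of_mem_blocks_bot hB, Nat.cast_one, one_zpow]

theorem card_factorizations_zero (h : cycles σ ≤ r)
    (hr : 2 * #(blocks r) = Fintype.card α + #(blocks (cycles σ))) :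
    (#(factorizations 0 r σ) : ℚ) = hurwitzWeight r (cycles σ) := by
  have hle := card_blocks_le_of_le h
  have hσ : cycles σ = ⊥ := eq_bot_of_card_le (by omega)
  obtain rfl : r = ⊥ := eq_bot_of_card_le (by rw [hσ, card_blocks_bot] at hr; omega)
  obtain rfl : σ = 1 := Perm.ext fun a => (cycles_le_iff.1 hσ.le a).symm
  rw [hσ, hurwitzWeight_bot, Nat.cast_eq_one, card_eq_one]
  exact ⟨Fin.elim0, eq_singleton_iff_unique_mem.2
    ⟨by simp [mem_factorizations, orbits_empty], fun t _ => Subsingleton.elim t _⟩⟩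

open Classical in
theorem sum_card_factorizations
    (ih : ∀ (r : Setoid α) (σ : Perm α), cycles σ ≤ r →
      m + 2 * #(blocks r) = Fintype.card α + #(blocks (cycles σ)) →
      (#(factorizations m r σ) : ℚ) = m.factorial * hurwitzWeight r (cycles σ))
    (hxy : x ≠ y) (h : cycles σ ≤ r)
    (hm : m + 1 + 2 * #(blocks r) = Fintype.card α + #(blocks (cycles σ))) :
    ((∑ r' with join r' x y = r, #(factorizations m r' (swap x y * σ)) : ℕ) : ℚ) =
      m.factorial * stepWeight r σ x y := by
  by_cases hc : cycles σ x y
  · have := card_blocks_cycles_swap_mul hxy hc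
    rw [sum_card_factorizations_of_cycles hxy hc hm, stepWeight, if_pos hc, mul_sum, Nat.cast_sum]
    refine sum_congr rfl fun r' hr' => ?_
    obtain ⟨rfl, hr', hle⟩ := mem_splittings.1 hr'
    have := card_blocks_join hr'
    exact ih r' _ hle (by omega)
  · have := card_blocks_cycles_swap_mul_of_not_rel hc
    rw [sum_card_factorizations_of_not_cycles r m hc, stepWeight, if_neg hc]
    split_ifs with hr
    · refine ih r _ ?_ (by omega)
      rw [cycles_swap_mul_of_not_rel hc]
      exact join_le_iff.2 ⟨h, hr⟩
    · simp

theorem card_factorizations (h : cycles σ ≤ r)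
    (hm : m + 2 * #(blocks r) = Fintype.card α + #(blocks (cycles σ))) :
    (#(factorizations m r σ) : ℚ) = m.factorial * hurwitzWeight r (cycles σ) := by
  classical
  induction m generalizing r σ with
  | zero => simpa using card_factorizations_zero h (by omega)
  | succ m ih =>
    have hcount : (Fintype.card α + #(blocks (cycles σ)) - 2 * #(blocks r) : ℚ) = m + 1 := by
      rw [sub_eq_iff_eq_add]
      exact_mod_cast hm.symm
    rw [← mul_right_inj' two_ne_zero]
    calc (2 * #(factorizations (m + 1) r σ) : ℚ)
        = ∑ x, ∑ y ∈ univ.erase x, m.factorial * stepWeight r σ x y := by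
          rw [← sum_congr rfl fun x _ => sum_congr rfl fun y hy =>
            sum_card_factorizations (fun r σ => ih) (ne_of_mem_erase hy).symm h hm]
          exact_mod_cast two_mul_card_factorizations_succ m r σ
      _ = 2 * ((m + 1).factorial * hurwitzWeight r (cycles σ)) := by
          simp only [← mul_sum]
          rw [sum_stepWeight h, hcount, Nat.factorial_succ]
          push_cast
          ring

end Factorizations

section CycleType

open Finset

variable {α : Type*} [Fintype α] [DecidableEq α] {ρ : Perm α} {x : α}

theorem block_cycles_of_mem_support (hx : x ∈ ρ.support) :
    block (cycles ρ) x = (ρ.cycleOf x).support := by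
  ext y
  rw [mem_block, Perm.mem_support_cycleOf_iff]
  exact (and_iff_left hx).symm

theorem block_cycles_of_notMem_support (hx : x ∉ ρ.support) : block (cycles ρ) x = {x} := by
  ext y
  rw [mem_block, mem_singleton]
  refine ⟨fun h => (Perm.SameCycle.eq_of_left h (Perm.notMem_support.1 hx)).symm, ?_⟩
  rintro rfl
  exact (cycles ρ).refl y

theorem blocks_cycles (ρ : Perm α) :
    blocks (cycles ρ) = ρ.cycleFactorsFinset.image Perm.support ∪ ρ.supportᶜ.image ({·}) := by
  ext C
  simp only [mem_blocks, mem_union, mem_image, mem_compl]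
  constructor
  · rintro ⟨x, rfl⟩
    by_cases hx : x ∈ ρ.support
    · exact .inl ⟨_, Perm.cycleOf_mem_cycleFactorsFinset_iff.2 hx,
        (block_cycles_of_mem_support hx).symm⟩
    · exact .inr ⟨x, hx, (block_cycles_of_notMem_support hx).symm⟩
  · rintro (⟨c, hc, rfl⟩ | ⟨x, hx, rfl⟩)
    · obtain ⟨x, hx⟩ := (Perm.mem_cycleFactorsFinset_iff.1 hc).1.nonempty_support
      refine ⟨x, ?_⟩
      rw [block_cycles_of_mem_support (Perm.mem_cycleFactorsFinset_support_le hc hx),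
        ← Perm.cycle_is_cycleOf hx hc]
    · exact ⟨x, block_cycles_of_notMem_support hx⟩

theorem map_card_blocks_cycles (ρ : Perm α) :
    (blocks (cycles ρ)).val.map card = ρ.partition.parts := by
  have support_injOn : Set.InjOn Perm.support (ρ.cycleFactorsFinset : Set (Perm α)) :=
    fun c hc d hd h => by
      obtain ⟨x, hx⟩ := (Perm.mem_cycleFactorsFinset_iff.1 hc).1.nonempty_support
      rw [Perm.cycle_is_cycleOf hx hc, Perm.cycle_is_cycleOf (h ▸ hx) hd]
  have nontrivial_disjoint_trivial :
      Disjoint (ρ.cycleFactorsFinset.image Perm.support) (ρ.supportᶜ.image ({·})) := by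
    simp only [disjoint_left, mem_image, not_exists, not_and]
    rintro _ ⟨c, hc, rfl⟩ x - hx
    have := (Perm.mem_cycleFactorsFinset_iff.1 hc).1.two_le_card_support
    rw [← hx, card_singleton] at this
    omega
  rw [blocks_cycles, ← disjUnion_eq_union _ _ nontrivial_disjoint_trivial, disjUnion_val,
    image_val_of_injOn support_injOn, image_val_of_injOn (singleton_injective.injOn),
    Multiset.map_add, Multiset.map_map, Multiset.map_map, Perm.parts_partition, Perm.cycleType_def]
  simp [card_compl]

theorem card_blocks_cycles (ρ : Perm α) :
    #(blocks (cycles ρ)) + ρ.cycleType.sum = ρ.cycleType.card + Fintype.card α := by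
  have := congrArg Multiset.card (map_card_blocks_cycles ρ)
  rw [Multiset.card_map, card_val, Perm.parts_partition, Multiset.card_add,
    Multiset.card_replicate] at this
  have := ρ.sum_cycleType
  have := card_le_univ ρ.support
  omega

theorem prod_blocks_cycles {M : Type*} [CommMonoid M] {F : ℕ → M} (h : F 1 = 1) (ρ : Perm α) :
    ∏ C ∈ blocks (cycles ρ), F #C = (ρ.cycleType.map F).prod := by
  have := congrArg (fun s => (Multiset.map F s).prod) (map_card_blocks_cycles ρ)
  simpa [Perm.parts_partition, h, Multiset.map_map, Function.comp_def] using this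

end CycleType

section Hurwitz

open Finset Nat

variable {α : Type*}

theorem orbits_eq_top_iff {S : Set (Perm α)} :
    orbits S = ⊤ ↔ ∀ x y, ∃ g ∈ Subgroup.closure S, g x = y := by
  simp only [eq_top_iff, ← orbits_apply]
  exact ⟨fun h x y => h trivial, fun h x y _ => h y x⟩

theorem closure_insert_inv_prod {G : Type*} [Group G] {m : ℕ} {g : G} {t : Fin m → G}
    (h : g * (List.ofFn t).prod = 1) :
    Subgroup.closure ({g} ∪ Set.range t) = Subgroup.closure (Set.range t) := by
  refine le_antisymm ((Subgroup.closure_le _).2 (Set.union_subset ?_ Subgroup.subset_closure))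
    (Subgroup.closure_mono Set.subset_union_right)
  rw [Set.singleton_subset_iff, eq_inv_of_mul_eq_one_left h]
  exact inv_mem (prod_ofFn_mem_closure t)

variable [Fintype α] [DecidableEq α] {m : ℕ} {σ : Perm α}

theorem mem_factorizations_top {t : Fin m → Perm α} : t ∈ factorizations m ⊤ σ⁻¹ ↔
    (∀ i, (t i).IsSwap) ∧ σ * (List.ofFn t).prod = 1 ∧
      ∀ x y, ∃ g ∈ Subgroup.closure ({σ} ∪ Set.range t), g x = y := by
  rw [mem_factorizations, mul_eq_one_iff_eq_inv']
  refine and_congr_right fun _ => and_congr_right fun h => ?_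
  rw [orbits_eq_top_iff, closure_insert_inv_prod (mul_eq_one_iff_eq_inv'.2 h)]

theorem blocks_top [Nonempty α] : blocks (⊤ : Setoid α) = {univ} := by
  have block_top (x : α) : block ⊤ x = univ := eq_univ_of_forall fun y => mem_block.2 trivial
  ext B
  rw [mem_blocks, mem_singleton]
  simp [block_top, eq_comm]

theorem hurwitzWeight_top [Nonempty α] (s : Setoid α) :
    hurwitzWeight ⊤ s =
      (Fintype.card α : ℚ) ^ ((#(blocks s) : ℤ) - 3) * ∏ C ∈ blocks s, cycleWeight #C := by
  have blocksIn_univ : blocksIn s univ = blocks s :=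
    filter_true_of_mem fun C _ => subset_univ C
  rw [hurwitzWeight, blocks_top, prod_singleton, blocksIn_univ, Finset.card_univ]

/-- Hurwitz's formula for the number of minimal transitive factorizations of a permutation into
transpositions. -/
theorem card_factorizations_top
    (hm : m + σ.cycleType.sum + 2 = 2 * Fintype.card α + σ.cycleType.card) :
    (#(factorizations m ⊤ σ) : ℚ) = m ! *
      ((Fintype.card α : ℚ) ^ ((Fintype.card α : ℤ) + σ.cycleType.card - σ.cycleType.sum - 3) *
        (σ.cycleType.prod * (σ.cycleType.map fun k => (k ^ k / k ! : ℚ)).prod)) := by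
  have hblocks := card_blocks_cycles σ
  have hnonempty : Nonempty α := by
    by_contra hempty
    rw [not_nonempty_iff] at hempty
    simp [Subsingleton.elim σ 1] at hm
  have exponent : (#(blocks (cycles σ)) : ℤ) - 3 =
      Fintype.card α + σ.cycleType.card - σ.cycleType.sum - 3 := by omega
  rw [card_factorizations le_top (by rw [blocks_top, card_singleton]; omega), hurwitzWeight_top,
    prod_blocks_cycles cycleWeight_one, exponent, Nat.cast_multiset_prod, ← Multiset.prod_map_mul]
  rfl

theorem card_transitive_eq_sum (c : Multiset ℕ) (m : ℕ) :
    Nat.card {p : Perm α × (Fin m → Perm α) //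
        p.1.cycleType = c ∧ (∀ i, (p.2 i).IsSwap) ∧ p.1 * (List.ofFn p.2).prod = 1 ∧
        ∀ x y, ∃ g ∈ Subgroup.closure ({p.1} ∪ Set.range p.2), g x = y} =
      ∑ σ : Perm α with σ.cycleType = c, #(factorizations m ⊤ σ⁻¹) := by
  rw [← card_sigma, ← card_map (Equiv.sigmaEquivProd _ _).toEmbedding, ← Nat.subtype_card]
  simp [mem_factorizations_top]

theorem card_cycleType_mul_prod {c : Multiset ℕ} (hc : ∀ k ∈ c, 2 ≤ k)
    (hsum : c.sum ≤ Fintype.card α) :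
    (#{σ : Perm α | σ.cycleType = c} * c.prod : ℚ) =
      (Fintype.card α)! / ((Fintype.card α - c.sum)! * ∏ k ∈ c.toFinset, (c.count k)!) := by
  rw [eq_div_iff (by positivity)]
  have := Perm.card_of_cycleType_mul_eq α c
  rw [if_pos ⟨hsum, hc⟩] at this
  rw [← this]
  push_cast
  ring

end Hurwitz

end GenusZeroHurwitz

open GenusZeroHurwitz Finset Nat in
/-- Hurwitz's formula for a branch point of arbitrary cycle type. -/
theorem hurwitz_number_1_1_2_1_general {α : Type*} [Fintype α] [DecidableEq α] {c : Multiset ℕ}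
    (hc : ∀ k ∈ c, 2 ≤ k) (hsum : c.sum ≤ Fintype.card α) {m : ℕ}
    (hm : m + c.sum + 2 = 2 * Fintype.card α + c.card) :
    (Nat.card {p : Perm α × (Fin m → Perm α) //
        p.1.cycleType = c ∧ (∀ i, (p.2 i).IsSwap) ∧ p.1 * (List.ofFn p.2).prod = 1 ∧
        ∀ x y, ∃ g ∈ Subgroup.closure ({p.1} ∪ Set.range p.2), g x = y} : ℚ) =
      (Fintype.card α)! *
        ((c.map fun k => (k ^ k / k ! : ℚ)).prod / ∏ k ∈ c.toFinset, (c.count k)!) *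
        (m ! / (Fintype.card α - c.sum)!) *
        (Fintype.card α : ℚ) ^ ((Fintype.card α : ℤ) + c.card - c.sum - 3) := by
  have card_factorizations_inv : ∀ σ ∈ ({σ | σ.cycleType = c} : Finset (Perm α)),
      (#(factorizations m ⊤ σ⁻¹) : ℚ) = m ! *
        ((Fintype.card α : ℚ) ^ ((Fintype.card α : ℤ) + c.card - c.sum - 3) *
          (c.prod * (c.map fun k => (k ^ k / k ! : ℚ)).prod)) := fun σ hσ => by
    obtain rfl := (mem_filter.1 hσ).2
    rw [← Perm.cycleType_inv] at hm ⊢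
    exact card_factorizations_top hm
  have card_cycleType := card_cycleType_mul_prod hc hsum
  rw [card_transitive_eq_sum, Nat.cast_sum, sum_congr rfl card_factorizations_inv, sum_const,
    nsmul_eq_mul]
  linear_combination m ! * (Fintype.card α : ℚ) ^ ((Fintype.card α : ℤ) + c.card - c.sum - 3) *
    (c.map fun k => (k ^ k / k ! : ℚ)).prod * card_cycleType

/-- Genus-zero Hurwitz number h_{1^1 2^1}: one branch point of cycle type (3,2,1^{n-5}) and 2n-5 transpositions; h_{1^1 2^1} = 9 * ((2n-5)!/(n-5)!) * n^(n-6). -/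
theorem hurwitz_number_1_1_2_1 (n : ℕ) (hn : 5 ≤ n) :
    (Nat.card {p : Perm (Fin n) × (Fin (2 * n - 5) → Perm (Fin n)) //
        p.1.cycleType = {2, 3} ∧
        (∀ i, (p.2 i).IsSwap) ∧
        p.1 * (List.ofFn p.2).prod = 1 ∧
        (∀ x y : Fin n, ∃ g ∈ Subgroup.closure ({p.1} ∪ Set.range p.2),
          g x = y)} : ℚ) =
      (n.factorial : ℚ) * (9) *
        (((2 * n - 5).factorial : ℚ) / ((n - 5).factorial : ℚ)) *
        (n : ℚ) ^ ((n : ℤ) - 6) := by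
  have multiplicity : (2 ^ 2 / 2 * (3 ^ 3 / 6) : ℚ) = 9 := by norm_num
  have exponent : (n : ℤ) + 2 - 5 - 3 = n - 6 := by ring
  simpa [Nat.factorial, multiplicity, exponent] using
    hurwitz_number_1_1_2_1_general (α := Fin n) (c := {2, 3}) (m := 2 * n - 5)
      (by simp) (by simpa using hn) (by simp; omega)
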